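/- For all positive integers n and k, the following identity holds (as formal power series in q, equivalently in the field of fractions): q^{k(k−1)(6n+8k−1)/6} · Σ_{π∈RPP(δ_{n+2k}/δ_n)} q^{|π|} = det( E*_{2n+2i+2j−3}(q)/(q;q)_{2n+2i+2j−3} )_{i,j=1}^k. -/

import Mathlib

open Finset

attribute [local instance 10] Classical.propDecidable

noncomputable section

namespace Paper

/-! ### Words and permutation statistics (all words are 1-based). -/

/-- The word (one-line notation, 1-based) of a permutation of `{1, …, N}`:
`word π i = π(i)` for `1 ≤ i ≤ N`, and `0` otherwise. -/
def word {N : ℕ} (π : Equiv.Perm (Fin N)) (i : ℕ) : ℕ :=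
  if h : 1 ≤ i ∧ i ≤ N then (π ⟨i - 1, by omega⟩ : ℕ) + 1 else 0

/-- The major index of a word of length `N`: the sum of the descents. -/
def majW (N : ℕ) (w : ℕ → ℕ) : ℕ :=
  ∑ i ∈ Finset.Icc 1 (N - 1), if w (i + 1) < w i then i else 0

/-- The number of inversions of a word of length `N`. -/
def invW (N : ℕ) (w : ℕ → ℕ) : ℕ :=
  (((Finset.Icc 1 N) ×ˢ (Finset.Icc 1 N)).filter
    fun p => p.1 < p.2 ∧ w p.2 < w p.1).card

/-- The number of descents of a word of length `m`. -/
def desW (m : ℕ) (w : ℕ → ℕ) : ℕ :=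
  ((Finset.Icc 1 (m - 1)).filter fun i => w (i + 1) < w i).card

/-- The number of ascents of a word of length `m`. -/
def ascW (m : ℕ) (w : ℕ → ℕ) : ℕ :=
  ((Finset.Icc 1 (m - 1)).filter fun i => w i < w (i + 1)).card

/-- The number of non-descents of a word of length `m`. -/
def ndesW (m : ℕ) (w : ℕ → ℕ) : ℕ :=
  ((Finset.Icc 1 m).filter fun i => i = m ∨ w i < w (i + 1)).card

/-- The number of non-ascents of a word of length `m`. -/
def nascW (m : ℕ) (w : ℕ → ℕ) : ℕ :=
  ((Finset.Icc 1 m).filter fun i => i = m ∨ ¬ w i < w (i + 1)).card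

/-- `π_e = π₂π₄⋯`, the subword of even-position entries, as a 1-based word. -/
def evenWord {N : ℕ} (π : Equiv.Perm (Fin N)) (j : ℕ) : ℕ := word π (2 * j)

/-- `π_o = π₁π₃⋯`, the subword of odd-position entries, as a 1-based word. -/
def oddWord {N : ℕ} (π : Equiv.Perm (Fin N)) (j : ℕ) : ℕ := word π (2 * j - 1)

/-- A word of length `N` is alternating: `w₁ < w₂ > w₃ < w₄ > ⋯`. -/
def IsAltW (N : ℕ) (w : ℕ → ℕ) : Prop :=
  ∀ i ∈ Finset.Icc 1 (N - 1), (i % 2 = 1 → w i < w (i + 1)) ∧ (i % 2 = 0 → w (i + 1) < w i)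

/-- A word of length `N` is reverse alternating: `w₁ > w₂ < w₃ > w₄ < ⋯`. -/
def IsRaltW (N : ℕ) (w : ℕ → ℕ) : Prop :=
  ∀ i ∈ Finset.Icc 1 (N - 1), (i % 2 = 1 → w (i + 1) < w i) ∧ (i % 2 = 0 → w i < w (i + 1))

/-- `Alt_N`, the set of alternating permutations of `{1, …, N}`. -/
def altPerms (N : ℕ) : Finset (Equiv.Perm (Fin N)) :=
  Finset.univ.filter fun π => IsAltW N (word π)

/-- `Ralt_N`, the set of reverse alternating permutations of `{1, …, N}`. -/
def raltPerms (N : ℕ) : Finset (Equiv.Perm (Fin N)) :=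
  Finset.univ.filter fun π => IsRaltW N (word π)

/-- `κ_N = (1)(2,3)(4,5)⋯`, acting on the 1-based values `{1, …, N}`. -/
def kappaNat (N j : ℕ) : ℕ :=
  if j % 2 = 0 ∧ 2 ≤ j ∧ j + 1 ≤ N then j + 1
  else if j % 2 = 1 ∧ 3 ≤ j ∧ j ≤ N then j - 1
  else j

/-- `η_N = (1,2)(3,4)⋯`, acting on the 1-based values `{1, …, N}`. -/
def etaNat (N j : ℕ) : ℕ :=
  if j % 2 = 1 ∧ j + 1 ≤ N then j + 1
  else if j % 2 = 0 ∧ 2 ≤ j ∧ j ≤ N then j - 1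
  else j

/-- `maj(π⁻¹)`. -/
def majInv (N : ℕ) (π : Equiv.Perm (Fin N)) : ℕ := majW N (word π.symm)

/-- `maj(κ_N π⁻¹)`. -/
def majKappaInv (N : ℕ) (π : Equiv.Perm (Fin N)) : ℕ :=
  majW N fun i => kappaNat N (word π.symm i)

/-- `maj(η_N π⁻¹)`. -/
def majEtaInv (N : ℕ) (π : Equiv.Perm (Fin N)) : ℕ :=
  majW N fun i => etaNat N (word π.symm i)

/-- The reversal permutation `i ↦ N + 1 - i` of `Fin N`. -/
def revPerm (N : ℕ) : Equiv.Perm (Fin N) :=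
  ⟨Fin.rev, Fin.rev, fun i => Fin.rev_rev i, fun i => Fin.rev_rev i⟩

/-- `φ(π)ᵢ = (N+1) - π_{N+1-i}`. -/
def phiMap {N : ℕ} (π : Equiv.Perm (Fin N)) : Equiv.Perm (Fin N) :=
  ((revPerm N).trans π).trans (revPerm N)

/-! ### Lattice paths.

A path with `L` unit steps is encoded by `s : Fin L → Bool` (`true` = up-step `(1,1)`,
`false` = down-step `(1,-1)`). -/

/-- The vertical displacement of the `j`-th step. -/
def stepVal {L : ℕ} (s : Fin L → Bool) (j : ℕ) : ℤ :=
  if h : j < L then (if s ⟨j, h⟩ then 1 else -1) else 0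

/-- The height of the path after `i` steps. -/
def pht {L : ℕ} (s : Fin L → Bool) (i : ℕ) : ℤ := ∑ j ∈ Finset.range i, stepVal s j

/-- A Dyck path: stays (weakly) above the `x`-axis and ends at height `0`. -/
def IsDyck {L : ℕ} (s : Fin L → Bool) : Prop :=
  (∀ i ∈ Finset.range (L + 1), 0 ≤ pht s i) ∧ pht s L = 0

/-- The Dyck paths with `L` steps. -/
def dyckPaths (L : ℕ) : Finset (Fin L → Bool) := Finset.univ.filter fun s => IsDyck s

/-- The (indices of the) valleys of a path: a down-step followed by an up-step. -/
def valleys {L : ℕ} (s : Fin L → Bool) : Finset ℕ :=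
  (Finset.Icc 1 (L - 1)).filter fun i => stepVal s (i - 1) = -1 ∧ stepVal s i = 1

/-- The (indices of the) peaks of a path: an up-step followed by a down-step. -/
def peaks {L : ℕ} (s : Fin L → Bool) : Finset ℕ :=
  (Finset.Icc 1 (L - 1)).filter fun i => stepVal s (i - 1) = 1 ∧ stepVal s i = -1

/-- The (indices of the) high peaks of a path: peaks of height at least `2`. -/
def highPeaks {L : ℕ} (s : Fin L → Bool) : Finset ℕ :=
  (peaks s).filter fun i => 2 ≤ pht s i

/-- The height over abscissa `x` of a path starting at `(-m, 0)`. -/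
def aht (m : ℕ) {L : ℕ} (s : Fin L → Bool) (x : ℤ) : ℤ := pht s (x + m).toNat

/-- `D₁ < D₂`, for `D₁` starting at `(-m₁,0)` and `D₂` at `(-m₂,0)`, `m₁ ≤ m₂`:
strictly below on the common range of abscissas. -/
def PathLT (m₁ m₂ : ℕ) {L₁ L₂ : ℕ} (s₁ : Fin L₁ → Bool) (s₂ : Fin L₂ → Bool) : Prop :=
  ∀ x ∈ Finset.Icc (-(m₁ : ℤ)) (m₁ : ℤ), aht m₁ s₁ x < aht m₂ s₂ x

/-- `D₁ ≤ D₂`: weakly below, sharing no step. -/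
def PathLE (m₁ m₂ : ℕ) {L₁ L₂ : ℕ} (s₁ : Fin L₁ → Bool) (s₂ : Fin L₂ → Bool) : Prop :=
  (∀ x ∈ Finset.Icc (-(m₁ : ℤ)) (m₁ : ℤ), aht m₁ s₁ x ≤ aht m₂ s₂ x) ∧
    ∀ x ∈ Finset.Icc (-(m₁ : ℤ)) ((m₁ : ℤ) - 1),
      ¬(aht m₁ s₁ x = aht m₂ s₂ x ∧ aht m₁ s₁ (x + 1) = aht m₂ s₂ (x + 1))

/-- The abscissas of the common lattice points of two paths. -/
def interPts (m₁ m₂ : ℕ) {L₁ L₂ : ℕ} (s₁ : Fin L₁ → Bool) (s₂ : Fin L₂ → Bool) : Finset ℤ :=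
  (Finset.Icc (-(m₁ : ℤ)) (m₁ : ℤ)).filter fun x => aht m₁ s₁ x = aht m₂ s₂ x

/-- `Dyck^k_{2n}`: tuples `(D₁, …, D_k)` with `D_i ∈ Dyck((-n-2i+2,0) → (n+2i-2,0))`
(0-based: `D_i` has half-length `n + 2i`). -/
abbrev DyckTuple (n k : ℕ) := ∀ i : Fin k, Fin (2 * (n + 2 * (i : ℕ))) → Bool

/-- The tuples `(D₁ ≤ D₂ ≤ ⋯ ≤ D_k) ∈ Dyck^k_{2n}`. -/
def weakTuples (n k : ℕ) : Finset (DyckTuple n k) :=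
  Finset.univ.filter fun D =>
    (∀ i : Fin k, IsDyck (D i)) ∧
      ∀ (i : ℕ) (h : i + 1 < k),
        PathLE (n + 2 * i) (n + 2 * (i + 1)) (D ⟨i, by omega⟩) (D ⟨i + 1, h⟩)

/-- The tuples `(D₁ < D₂ < ⋯ < D_k) ∈ Dyck^k_{2n}`. -/
def strictTuples (n k : ℕ) : Finset (DyckTuple n k) :=
  Finset.univ.filter fun D =>
    (∀ i : Fin k, IsDyck (D i)) ∧
      ∀ (i : ℕ) (h : i + 1 < k),
        PathLT (n + 2 * i) (n + 2 * (i + 1)) (D ⟨i, by omega⟩) (D ⟨i + 1, h⟩)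

/-- The lattice points of a path starting at `(-m, 0)`, as a finite subset of `ℤ × ℤ`. -/
def pathPoints (m : ℕ) {L : ℕ} (s : Fin L → Bool) : Finset (ℤ × ℤ) :=
  (Finset.range (L + 1)).image fun t : ℕ => (-(m : ℤ) + (t : ℤ), pht s t)

/-- The non-valley lattice points of a path starting at `(-m, 0)`. -/
def nonValleyPoints (m : ℕ) {L : ℕ} (s : Fin L → Bool) : Finset (ℤ × ℤ) :=
  ((Finset.range (L + 1)).filter fun t => t ∉ valleys s).image
    fun t : ℕ => (-(m : ℤ) + (t : ℤ), pht s t)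

section Weights

variable {F : Type*} [Field F]

/-- The `i`-th lattice point (in `ℤ × ℕ`) of a path starting at `(a, 0)`. -/
def ptOf (a : ℤ) {L : ℕ} (s : Fin L → Bool) (i : ℕ) : ℤ × ℕ := (a + i, (pht s i).toNat)

/-- `wt_V(D) = ∏_{p ∈ D} wt(p) · ∏_{p ∈ V(D)} w̃t(p)` for a path starting at `(a, 0)`. -/
def wtVal (wt wte : ℤ × ℕ → F) (a : ℤ) {L : ℕ} (s : Fin L → Bool) : F :=
  (∏ i ∈ Finset.range (L + 1), wt (ptOf a s i)) * ∏ i ∈ valleys s, wte (ptOf a s i)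

/-- `wt_HP(D) = ∏_{p ∈ D} wt(p) · ∏_{p ∈ HP(D)} w̃t(p)` for a path starting at `(a, 0)`. -/
def wtHigh (wt wte : ℤ × ℕ → F) (a : ℤ) {L : ℕ} (s : Fin L → Bool) : F :=
  (∏ i ∈ Finset.range (L + 1), wt (ptOf a s i)) * ∏ i ∈ highPeaks s, wte (ptOf a s i)

/-- `∏_{p ∈ D₁ ∩ D₂} f(p)`, for `D₁` starting at `(-m₁,0)` and `D₂` at `(-m₂,0)`. -/
def interProd (f : ℤ × ℕ → F) (m₁ m₂ : ℕ) {L₁ L₂ : ℕ}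
    (s₁ : Fin L₁ → Bool) (s₂ : Fin L₂ → Bool) : F :=
  ∏ x ∈ interPts m₁ m₂ s₁ s₂, f (x, (aht m₁ s₁ x).toNat)

/-- The sum over `(D₁ ≤ ⋯ ≤ D_k) ∈ Dyck^k_{2n}` of
`wt_V(D₁)⋯wt_V(D_k) ∏_{i=1}^{k-1} ∏_{p ∈ D_i ∩ D_{i+1}} (1 - w̃t(p)⁻¹)`. -/
def weakSum (wt wte : ℤ × ℕ → F) (n k : ℕ) : F :=
  ∑ D ∈ weakTuples n k,
    (∏ i : Fin k, wtVal wt wte (-(n : ℤ) - 2 * (i : ℕ)) (D i)) *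
      ∏ j : Fin (k - 1),
        interProd (fun p => 1 - (wte p)⁻¹) (n + 2 * (j : ℕ)) (n + 2 * ((j : ℕ) + 1))
          (D ⟨(j : ℕ), by have := j.isLt; omega⟩)
          (D ⟨(j : ℕ) + 1, by have := j.isLt; omega⟩)

/-- The sum over `(D₁ < ⋯ < D_k) ∈ Dyck^k_{2n}` of `wt_V(D₁)⋯wt_V(D_k)`. -/
def strictSum (wt wte : ℤ × ℕ → F) (n k : ℕ) : F :=
  ∑ D ∈ strictTuples n k, ∏ i : Fin k, wtVal wt wte (-(n : ℤ) - 2 * (i : ℕ)) (D i)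

end Weights

/-! ### Schröder paths.

A path with `L` steps is encoded by `st : Fin L → Fin 3`
(`0` = up-step `(1,1)`, `1` = down-step `(1,-1)`, `2` = horizontal step `(2,0)`). -/

/-- The horizontal displacement of the `j`-th step. -/
def stepX {L : ℕ} (st : Fin L → Fin 3) (j : ℕ) : ℕ :=
  if h : j < L then (if st ⟨j, h⟩ = 2 then 2 else 1) else 0

/-- The vertical displacement of the `j`-th step. -/
def stepY {L : ℕ} (st : Fin L → Fin 3) (j : ℕ) : ℤ :=
  if h : j < L then (if st ⟨j, h⟩ = 0 then 1 else if st ⟨j, h⟩ = 1 then -1 else 0) else 0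

/-- The horizontal position (relative to the start) after `j` steps. -/
def xpos {L : ℕ} (st : Fin L → Fin 3) (j : ℕ) : ℕ := ∑ t ∈ Finset.range j, stepX st t

/-- The height after `j` steps. -/
def ypos {L : ℕ} (st : Fin L → Fin 3) (j : ℕ) : ℤ := ∑ t ∈ Finset.range j, stepY st t

/-- A (little) Schröder path of horizontal span `2m`: nonnegative heights, ends at
height `0`, and no horizontal step on the `x`-axis. -/
def IsSch (m : ℕ) {L : ℕ} (st : Fin L → Fin 3) : Prop :=
  xpos st L = 2 * m ∧ (∀ j ∈ Finset.range (L + 1), 0 ≤ ypos st j) ∧ ypos st L = 0 ∧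
    ∀ j ∈ Finset.range L, stepX st j = 2 → ypos st j ≠ 0

/-- The height of a Schröder path over the relative abscissa `x` (midpoints of
horizontal steps get the height of that horizontal step). -/
def schHeight {L : ℕ} (st : Fin L → Fin 3) (x : ℕ) : ℤ :=
  ∑ t ∈ Finset.range L, if xpos st (t + 1) ≤ x then stepY st t else 0

/-- The relative abscissa `x` is the midpoint of a horizontal step. -/
def IsHMid {L : ℕ} (st : Fin L → Fin 3) (x : ℕ) : Prop :=
  ∃ j ∈ Finset.range L, stepX st j = 2 ∧ xpos st j + 1 = x

/-- The number of horizontal steps of a Schröder path. -/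
def hsCount {L : ℕ} (st : Fin L → Fin 3) : ℕ :=
  ((Finset.range L).filter fun j => stepX st j = 2).card

/-- `wt_Sch(c, S) = c^{hs(S)} ∏_{p ∈ S} wt(p)` for a Schröder path starting at `(a,0)`. -/
def wtSch {F : Type*} [Field F] (wt : ℤ × ℕ → F) (c : F) (a : ℤ) {L : ℕ}
    (st : Fin L → Fin 3) : F :=
  c ^ hsCount st * ∏ j ∈ Finset.range (L + 1), wt (a + xpos st j, (ypos st j).toNat)

/-- `φ_V(S) = D`: the Dyck path `D` (with `L'` steps) is obtained from the Schröder
path `S` by replacing each horizontal step by a down-step followed by an up-step. -/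
def PhiVEq {L L' : ℕ} (st : Fin L → Fin 3) (s : Fin L' → Bool) : Prop :=
  ∀ x ∈ Finset.range (L' + 1),
    pht s x = schHeight st x - (if IsHMid st x then 1 else 0)

/-- `φ_HP(S) = D`: the Dyck path `D` is obtained from the Schröder path `S` by
replacing each horizontal step by an up-step followed by a down-step. -/
def PhiHPEq {L L' : ℕ} (st : Fin L → Fin 3) (s : Fin L' → Bool) : Prop :=
  ∀ x ∈ Finset.range (L' + 1),
    pht s x = schHeight st x + (if IsHMid st x then 1 else 0)

/-! ### Young diagrams, excited and pleasant diagrams, reverse plane partitions. -/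

/-- The cells (1-based, matrix coordinates) of the staircase `δ_m = (m-1, m-2, …, 1)`. -/
def deltaCells (m : ℕ) : Finset (ℕ × ℕ) :=
  ((Finset.Icc 1 m) ×ˢ (Finset.Icc 1 m)).filter fun c => c.1 + c.2 ≤ m

/-- An excited move inside the Young diagram `lam`. -/
def ExcitedStep (lam : Finset (ℕ × ℕ)) (D D' : Finset (ℕ × ℕ)) : Prop :=
  ∃ i j : ℕ, (i, j) ∈ D ∧ (i + 1, j) ∉ D ∧ (i, j + 1) ∉ D ∧ (i + 1, j + 1) ∉ D ∧
    (i + 1, j + 1) ∈ lam ∧ D' = insert (i + 1, j + 1) (D.erase (i, j))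

/-- `D` is an excited diagram of `lam/mu`. -/
def IsExcited (lam mu D : Finset (ℕ × ℕ)) : Prop :=
  Relation.ReflTransGen (ExcitedStep lam) mu D

/-- `P` is a pleasant diagram of `lam/mu`: a subset of `lam \ D` for an excited diagram `D`. -/
def IsPleasant (lam mu : Finset (ℕ × ℕ)) (P : Finset (ℕ × ℕ)) : Prop :=
  ∃ D, IsExcited lam mu D ∧ P ⊆ lam \ D

/-- `p(lam/mu)`, the number of pleasant diagrams of `lam/mu`. -/
def pleasantCount (lam mu : Finset (ℕ × ℕ)) : ℕ :=
  Set.ncard {P : Finset (ℕ × ℕ) | IsPleasant lam mu P}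

/-- A reverse plane partition on the skew shape `shape`: a filling by nonnegative
integers (vanishing off the shape) weakly increasing along rows and columns. -/
def IsRPP (shape : Finset (ℕ × ℕ)) (f : ℕ × ℕ → ℕ) : Prop :=
  (∀ c, c ∉ shape → f c = 0) ∧
    (∀ i j : ℕ, (i, j) ∈ shape → (i, j + 1) ∈ shape → f (i, j) ≤ f (i, j + 1)) ∧
    ∀ i j : ℕ, (i, j) ∈ shape → (i + 1, j) ∈ shape → f (i, j) ≤ f (i + 1, j)

/-- `∑_{π ∈ RPP(shape)} q^{|π|}` as a formal power series in `q`. -/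
def rppGF (shape : Finset (ℕ × ℕ)) : PowerSeries ℚ :=
  PowerSeries.mk fun N =>
    (Set.ncard {f : ℕ × ℕ → ℕ | IsRPP shape f ∧ ∑ c ∈ shape, f c = N} : ℚ)

/-- `(q; q)_m = ∏_{i=1}^m (1 - q^i)` as a formal power series. -/
def pochPS (m : ℕ) : PowerSeries ℚ :=
  ∏ i ∈ Finset.Icc 1 m, (1 - (PowerSeries.X : PowerSeries ℚ) ^ i)

/-- `E*_N(q) = ∑_{π ∈ Alt_N} q^{maj(κ_N π⁻¹)}` as a formal power series. -/
def EstarPS (N : ℕ) : PowerSeries ℚ :=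
  ∑ π ∈ altPerms N, (PowerSeries.X : PowerSeries ℚ) ^ majKappaInv N π

/-- `E*_m(q)/(q;q)_m` for `m ≥ 0`, and `0` for `m < 0`. -/
def EstarEntry (m : ℤ) : PowerSeries ℚ :=
  if m < 0 then 0 else EstarPS m.toNat * (pochPS m.toNat)⁻¹

/-- The Gaussian binomial coefficient `[N choose M]_q` as a formal power series. -/
def gaussPS (N M : ℕ) : PowerSeries ℚ :=
  pochPS N * (pochPS M * pochPS (N - M))⁻¹

/-!
Reading the content diagonals of the thick strip `δ_{n+2k}/δ_n` one after the other, and adding `p`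
to the entry of the `p`-th diagonal cell, turns reverse plane partitions into families of `k`
non-intersecting zigzag paths weighted by their area. Summing over the heights of such a family at
one time step acts on determinants of height functions through a single-path operator on each
column, so the generating function of the families is `det ((T ^ N)_{i,j})` for the transfer
operator `T` of one path, heights being cut off at a level `L` that does not affect the
coefficients of `q ^ M` for `M < L`. The rows and the columns of `T` satisfy three-term recurrences,
which turn this determinant into `q ^ (∑ p (2p - 1)) * det ((T ^ (m+i+j))_{0,0})`. By the case
`k = 1`, the entries of the latter determinant count the reverse plane partitions of border strips
`δ_{m+2}/δ_m`. Sorting the entries of such a filling in decreasing order, with ties broken by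
`κ_{2m+1}`, gives `E*_{2m+1}(q) / (q;q)_{2m+1}`.
-/

section GeneratingFunctions

open PowerSeries

variable {α β : Type*}

/-- The generating function `∑_{a ∈ s} q ^ w a`, for a set `s` having finitely many elements of each
weight. Weights attained infinitely often have coefficient `0`. -/
def weightGF (s : Set α) (w : α → ℕ) : PowerSeries ℚ :=
  PowerSeries.mk fun M => ({a ∈ s | w a = M}.ncard : ℚ)

theorem coeff_weightGF (s : Set α) (w : α → ℕ) (M : ℕ) :
    coeff M (weightGF s w) = ({a ∈ s | w a = M}.ncard : ℚ) :=
  coeff_mk _ _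

theorem coeff_weightGF_eq_coeff_sum {s : Set α} {w : α → ℕ} {t : Finset α} {M : ℕ}
    (h : ∀ a, w a = M → (a ∈ s ↔ a ∈ t)) :
    coeff M (weightGF s w) = coeff M (∑ a ∈ t, (X : PowerSeries ℚ) ^ w a) := by
  have hset : {a ∈ s | w a = M} = ↑({a ∈ t | M = w a} : Finset α) := by
    ext a
    simpa [eq_comm] using fun hw => h a hw
  rw [coeff_weightGF, hset, Set.ncard_coe_finset]
  simp [coeff_X_pow]

theorem weightGF_eq_X_pow_mul_of_bijOn {s : Set α} {w : α → ℕ} {s' : Set β} {w' : β → ℕ}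
    {F : α → β} (hF : Set.BijOn F s s') {e : ℕ} (hw : ∀ a ∈ s, w' (F a) = e + w a) :
    weightGF s' w' = (X : PowerSeries ℚ) ^ e * weightGF s w := by
  ext M
  have himage : {b ∈ s' | w' b = M} = F '' {a ∈ s | e + w a = M} := by
    ext b
    constructor
    · rintro ⟨hb, rfl⟩
      obtain ⟨a, ha, rfl⟩ := hF.surjOn hb
      exact ⟨a, ⟨ha, (hw a ha).symm⟩, rfl⟩
    · rintro ⟨a, ⟨ha, rfl⟩, rfl⟩
      exact ⟨hF.mapsTo ha, hw a ha⟩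
  rw [coeff_weightGF, himage, (hF.injOn.mono fun a ha => ha.1).ncard_image]
  obtain ⟨M, rfl⟩ | hM : (∃ M', M = e + M') ∨ M < e :=
    (le_or_gt e M).imp_left Nat.exists_eq_add_of_le
  · simp [add_comm e M, coeff_X_pow_mul, coeff_weightGF, add_comm e]
  · rw [coeff_X_pow_mul', if_neg hM.not_ge, Nat.cast_eq_zero]
    convert Set.ncard_empty α
    ext a
    simp only [Set.mem_ofPred_eq, Set.mem_empty_iff_false, iff_false]
    omega

theorem weightGF_congr_of_bijOn {s : Set α} {w : α → ℕ} {s' : Set β} {w' : β → ℕ} {F : α → β}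
    (hF : Set.BijOn F s s') (hw : ∀ a ∈ s, w' (F a) = w a) : weightGF s' w' = weightGF s w := by
  simpa using weightGF_eq_X_pow_mul_of_bijOn hF (e := 0) (by simpa using hw)

theorem weightGF_eq_sum_fiber {s : Set α} {w : α → ℕ} (hfin : ∀ M, {a ∈ s | w a = M}.Finite)
    [Fintype β] (F : α → β) : weightGF s w = ∑ b, weightGF {a ∈ s | F a = b} w := by
  ext M
  let T := (hfin M).toFinset
  have hT : ({a ∈ s | w a = M} : Set α) = T := (hfin M).coe_toFinset.symm
  have hfiber (b : β) : {a ∈ {a ∈ s | F a = b} | w a = M} = ({a ∈ T | F a = b} : Finset α) := by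
    ext a
    simp [T, and_right_comm]
  simp only [map_sum, coeff_weightGF, hfiber, hT, Set.ncard_coe_finset]
  exact_mod_cast card_eq_sum_card_fiberwise fun a _ => mem_coe.2 (mem_univ (F a))

end GeneratingFunctions

section Determinants

variable {R : Type*} [CommRing R]

theorem dvd_det_sub_det {ι : Type*} [Fintype ι] [DecidableEq ι] {a : R} {A B : Matrix ι ι R}
    (h : ∀ i j, a ∣ A i j - B i j) : a ∣ A.det - B.det := by
  have hmap : (Ideal.Quotient.mk (Ideal.span {a})).mapMatrix A =
      (Ideal.Quotient.mk (Ideal.span {a})).mapMatrix B := by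
    ext i j
    exact Ideal.Quotient.eq.2 (Ideal.mem_span_singleton.2 (h i j))
  rw [← Ideal.mem_span_singleton, ← Ideal.Quotient.eq, RingHom.map_det, RingHom.map_det, hmap]

theorem det_sum_Ico_eq_det_sum_Ico_bot {k : ℕ} (f : ℕ → Fin k → R) {u : Fin (k + 1) → ℕ}
    (hu : Monotone u) :
    (Matrix.of fun p : Fin k => ∑ z ∈ Ico (u p.castSucc) (u p.succ), f z).det =
      (Matrix.of fun p : Fin k => ∑ z ∈ Ico (u 0) (u p.succ), f z).det := by
  cases k with
  | zero => simp
  | succ k =>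
    refine (Matrix.det_eq_of_forall_row_eq_smul_add_pred (fun _ => 1) (fun j => ?_)
      fun p j => ?_).symm
    · simp
    · simp only [Matrix.of_apply, Finset.sum_apply, one_mul, Fin.succ_castSucc]
      exact (sum_Ico_consecutive _ (hu (Fin.zero_le _)) (hu (Fin.castSucc_le_succ _))).symm.trans
        (add_comm _ _)

theorem det_sum_Ico_eq_det_sum_Ico_top {k : ℕ} (f : ℕ → Fin k → R) {u : Fin (k + 1) → ℕ}
    (hu : Monotone u) :
    (Matrix.of fun p : Fin k => ∑ z ∈ Ico (u p.castSucc) (u p.succ), f z).det =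
      (Matrix.of fun p : Fin k => ∑ z ∈ Ico (u p.castSucc) (u (Fin.last k)), f z).det := by
  cases k with
  | zero => simp
  | succ k =>
    rw [← Matrix.det_submatrix_equiv_self Fin.revPerm,
      ← Matrix.det_submatrix_equiv_self Fin.revPerm
        (Matrix.of fun p => ∑ z ∈ Ico (u p.castSucc) (u (Fin.last _)), f z)]
    refine (Matrix.det_eq_of_forall_row_eq_smul_add_pred (fun _ => 1) (fun j => ?_)
      fun p j => ?_).symm
    · simp
    · simp only [Matrix.submatrix_apply, Matrix.of_apply, Finset.sum_apply, one_mul,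
        Fin.revPerm_apply, Fin.rev_succ, Fin.rev_castSucc, Fin.succ_castSucc]
      exact (sum_Ico_consecutive _ (hu (Fin.castSucc_le_succ _)) (hu (Fin.le_last _))).symm

theorem sum_piFinset_det {k : ℕ} {α : Type*} (s : Fin k → Finset α) (f : α → Fin k → R) :
    ∑ x ∈ Fintype.piFinset s, (Matrix.of fun p => f (x p)).det =
      (Matrix.of fun p => ∑ z ∈ s p, f z).det :=
  ((Matrix.detRowAlternating (n := Fin k) (R := R)).toMultilinearMap.map_sum_finset
    (fun _ => f) s).symm

variable {E : Type*} [AddCommGroup E] [Module R E]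

theorem det_dual_eq_prod_mul_of_sub_smul_mem_span {k : ℕ} {v w : Fin k → E} {d : Fin k → R}
    (h : ∀ j, v j - d j • w j ∈ Submodule.span R (w '' Set.Iio j)) (φ : Fin k → Module.Dual R E) :
    (Matrix.of fun i j => φ i (v j)).det = (∏ j, d j) * (Matrix.of fun i j => φ i (w j)).det := by
  choose c hcsupp hc using fun j => (Finsupp.mem_span_image_iff_linearCombination R).1 (h j)
  have hczero : ∀ {j l}, j ≤ l → c j l = 0 := fun {j l} hjl => by
    by_contra hne
    exact hjl.not_gt ((Finsupp.mem_supported R _).1 (hcsupp j) (Finsupp.mem_support_iff.2 hne))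
  let T : Matrix (Fin k) (Fin k) R := Matrix.of fun l j => c j l + if l = j then d j else 0
  have hfactor : (Matrix.of fun i j => φ i (v j)) = (Matrix.of fun i l => φ i (w l)) * T := by
    ext i j
    have hv : v j = ∑ l, c j l • w l + d j • w j := by
      rw [← sub_eq_iff_eq_add, ← hc, Finsupp.linearCombination_apply,
        Finsupp.sum_fintype _ _ (by simp)]
    simp [hv, T, Matrix.mul_apply, mul_add, sum_add_distrib, mul_comm]
  have hT : T.IsUpperTriangular := fun l j (hlj : j < l) => by
    simp [T, hczero hlj.le, hlj.ne']
  rw [hfactor, Matrix.det_mul, Matrix.det_of_isUpperTriangular hT, mul_comm]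
  simp [T, hczero le_rfl]

theorem pow_apply_sub_smul_mem_span {A : Module.End R E} {e : ℕ → E} {γ : ℕ → R} {k : ℕ}
    (h : ∀ p, p + 1 < k → A (e (p + 1)) - γ p • e p ∈
      Submodule.span R ((fun i => A (e i)) '' Set.Iic p)) {p n : ℕ} (hpk : p < k) (hpn : p ≤ n) :
    (A ^ n) (e p) - (∏ s ∈ range p, γ s) • (A ^ (n - p)) (e 0) ∈
      Submodule.span R ((fun m => (A ^ m) (e 0)) '' Set.Ioc (n - p) n) := by
  induction p using Nat.strong_induction_on generalizing n with
  | _ p ih =>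
    obtain _ | p := p
    · simp
    obtain ⟨n, rfl⟩ : ∃ n', n = n' + 1 := ⟨n - 1, by omega⟩
    set S := Submodule.span R ((fun m => (A ^ m) (e 0)) '' Set.Ioc (n + 1 - (p + 1)) (n + 1))
    have hlower : ∀ i ∈ Set.Iic p, (A ^ n) (A (e i)) ∈ S := fun i (hi : i ≤ p) => by
      have hmem := ih i (by omega) (n := n + 1) (by omega) (by omega)
      have hmem' : (A ^ (n + 1)) (e i) - (∏ s ∈ range i, γ s) • (A ^ (n + 1 - i)) (e 0) ∈ S :=
        Submodule.span_mono (Set.image_mono (Set.Ioc_subset_Ioc_left (by omega))) hmem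
      rw [← Module.End.mul_apply, ← pow_succ]
      refine (Submodule.sub_mem_iff_left _ (Submodule.smul_mem _ _ ?_)).1 hmem'
      exact Submodule.subset_span ⟨n + 1 - i, ⟨by omega, by omega⟩, rfl⟩
    have hrec : (A ^ n) (A (e (p + 1)) - γ p • e p) ∈ S := by
      have hmem := Submodule.mem_map_of_mem (f := A ^ n) (h p hpk)
      rw [Submodule.map_span] at hmem
      refine Submodule.span_le.2 ?_ hmem
      rintro _ ⟨_, ⟨i, hi, rfl⟩, rfl⟩
      exact hlower i hi
    have hprev : (A ^ n) (e p) - (∏ s ∈ range p, γ s) • (A ^ (n - p)) (e 0) ∈ S :=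
      Submodule.span_mono (Set.image_mono (Set.Ioc_subset_Ioc (by omega) (by omega)))
        (ih p (by omega) (n := n) (by omega) (by omega))
    convert S.add_mem hrec (S.smul_mem (γ p) hprev) using 1
    rw [pow_succ, Module.End.mul_apply, prod_range_succ, Nat.add_sub_add_right, map_sub, map_smul,
      smul_sub, smul_smul, mul_comm (γ p)]
    abel

theorem det_dual_pow_apply {A : Module.End R E} {e : ℕ → E} {γ : ℕ → R} {k : ℕ}
    (h : ∀ p, p + 1 < k → A (e (p + 1)) - γ p • e p ∈
      Submodule.span R ((fun i => A (e i)) '' Set.Iic p)) (φ : Fin k → Module.Dual R E) {n : ℕ}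
    (hkn : k ≤ n + 1) :
    (Matrix.of fun i j : Fin k => φ i ((A ^ n) (e j))).det =
      (∏ p : Fin k, ∏ s ∈ range p, γ s) *
        (Matrix.of fun i j : Fin k => φ i ((A ^ (n - j)) (e 0))).det := by
  refine det_dual_eq_prod_mul_of_sub_smul_mem_span (fun j => ?_) φ
  refine Submodule.span_mono ?_ (pow_apply_sub_smul_mem_span h j.2 (n := n) (by omega))
  rintro _ ⟨m, ⟨hjm, hmn⟩, rfl⟩
  have hj := j.2
  exact ⟨⟨n - m, by omega⟩, Fin.lt_def.2 (by simp only; omega), by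
    simp only [Nat.sub_sub_self hmn]⟩

theorem transpose_pow_apply (A : Module.End R E) (n : ℕ) (φ : Module.Dual R E) (x : E) :
    ((Module.Dual.transpose A : Module.End R (Module.Dual R E)) ^ n) φ x = φ ((A ^ n) x) := by
  induction n generalizing φ with
  | zero => rfl
  | succ n ih => rw [pow_succ, Module.End.mul_apply, ih, pow_succ']; rfl

/- Both recurrences lower the index by one at the price of a factor, modulo earlier vectors, so the
matrix is a Hankel matrix up to unitriangular row and column operations. -/
theorem det_pow_eq_prod_mul_det_hankel {A : Module.End R E} {e : ℕ → E} {ε : ℕ → Module.Dual R E}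
    {γ γ' : ℕ → R} {k : ℕ}
    (he : ∀ p, p + 1 < k → A (e (p + 1)) - γ p • e p ∈
      Submodule.span R ((fun i => A (e i)) '' Set.Iic p))
    (hε : ∀ p, p + 1 < k → ε (p + 1) ∘ₗ A - γ' p • ε p ∈
      Submodule.span R ((fun i => ε i ∘ₗ A) '' Set.Iic p)) (m : ℕ) :
    (Matrix.of fun i j : Fin k => ε i ((A ^ (m + 2 * (k - 1))) (e j))).det =
      (∏ p : Fin k, ∏ s ∈ range p, γ s) * (∏ p : Fin k, ∏ s ∈ range p, γ' s) *
        (Matrix.of fun i j : Fin k => ε 0 ((A ^ (m + i + j)) (e 0))).det := by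
  let B : Module.End R (Module.Dual R E) := Module.Dual.transpose A
  have hcolumns := det_dual_pow_apply he (fun i => ε i) (n := m + 2 * (k - 1)) (by omega)
  have hrows := det_dual_pow_apply (A := B) (e := ε) hε
    (fun j => Module.Dual.eval R E ((A ^ (m + (k - 1) - j)) (e 0))) (n := k - 1) (by omega)
  rw [← Matrix.det_transpose] at hrows
  rw [hcolumns, mul_assoc]
  congr 1
  convert hrows using 1
  · congr 1
    ext i j
    simp only [Matrix.of_apply, Matrix.transpose_apply, Module.Dual.eval_apply, B,
      transpose_pow_apply]
    rw [← Module.End.mul_apply, ← pow_add]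
    congr 3
    have := j.2
    omega
  · congr 1
    rw [← Matrix.det_transpose, ← Matrix.det_submatrix_equiv_self Fin.revPerm]
    congr 1
    ext i j
    simp only [Matrix.of_apply, Matrix.transpose_apply, Module.Dual.eval_apply, B,
      transpose_pow_apply, Matrix.submatrix_apply, Fin.revPerm_apply, Fin.val_rev]
    rw [← Module.End.mul_apply, ← pow_add]
    congr 3
    have := j.2
    omega

end Determinants

section Operators

variable {R : Type*} [CommRing R]

/-- The operator summing over the possible positions of a particle after a move to the left: a
peak at height `x` is preceded by a valley of any height `z ≤ x`, of weight `q ^ z`. -/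
def fallSum (q : R) : Module.End R (ℕ → R) where
  toFun f x := ∑ z ∈ range (x + 1), q ^ z * f z
  map_add' f g := by ext; simp [mul_add, sum_add_distrib]
  map_smul' c f := by ext; simp [mul_sum, mul_left_comm]

/-- The operator summing over the possible positions of a particle after a move to the right,
truncated to heights below `L`. -/
def riseSum (q : R) (L : ℕ) : Module.End R (ℕ → R) where
  toFun f b := ∑ z ∈ Ico b L, q ^ z * f z
  map_add' f g := by ext; simp [mul_add, sum_add_distrib]
  map_smul' c f := by ext; simp [mul_sum, mul_left_comm]

/-- The operator of one valley-to-valley step of a single particle. -/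
def transferOp (q : R) (L : ℕ) : Module.End R (ℕ → R) := riseSum q L * fallSum q

variable (q : R)

theorem fallSum_apply (f : ℕ → R) (x : ℕ) :
    fallSum q f x = ∑ z ∈ range (x + 1), q ^ z * f z := rfl

theorem riseSum_apply (L : ℕ) (f : ℕ → R) (b : ℕ) :
    riseSum q L f b = ∑ z ∈ Ico b L, q ^ z * f z := rfl

theorem fallSum_apply_succ (f : ℕ → R) (x : ℕ) :
    fallSum q f (x + 1) = fallSum q f x + q ^ (x + 1) * f (x + 1) :=
  sum_range_succ _ _

theorem riseSum_apply_succ {L b : ℕ} (hb : b < L) (f : ℕ → R) :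
    riseSum q L f (b + 1) = riseSum q L f b - q ^ b * f b :=
  eq_sub_of_add_eq' (sum_eq_sum_Ico_succ_bot hb fun z => q ^ z * f z).symm

theorem fallSum_single_succ (p : ℕ) :
    fallSum q (Pi.single (p + 1) 1) =
      q • fallSum q (Pi.single p 1) - q ^ (p + 1) • Pi.single p 1 := by
  ext x
  simp only [fallSum_apply, Pi.single_apply, Pi.smul_apply, Pi.sub_apply, smul_eq_mul, mul_ite,
    mul_one, mul_zero, sum_ite_eq', mem_range, pow_succ']
  grind

theorem riseSum_single_succ {L p : ℕ} (hp : p + 1 < L) :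
    riseSum q L (Pi.single (p + 1) 1) =
      q • riseSum q L (Pi.single p 1) + q ^ (p + 1) • Pi.single (p + 1) 1 := by
  ext x
  simp only [riseSum_apply, Pi.single_apply, Pi.smul_apply, Pi.add_apply, smul_eq_mul, mul_ite,
    mul_one, mul_zero, sum_ite_eq', mem_Ico, pow_succ']
  grind

theorem riseSum_single_zero {L : ℕ} (hL : 0 < L) :
    riseSum q L (Pi.single 0 1) = Pi.single 0 1 := by
  ext x
  simp [riseSum_apply, Pi.single_apply, hL]

theorem transferOp_apply_one {L : ℕ} (hL : 0 < L) (f : ℕ → R) :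
    transferOp q L f 1 = transferOp q L f 0 - f 0 := by
  have hrise := riseSum_apply_succ q hL (fallSum q f)
  simpa [transferOp, fallSum_apply] using hrise

theorem transferOp_apply_add_two {L p : ℕ} (hp : p + 1 < L) (f : ℕ → R) :
    transferOp q L f (p + 2) =
      (1 + q) * transferOp q L f (p + 1) - q * transferOp q L f p -
        q ^ (2 * (p + 1)) * f (p + 1) := by
  have hrise₀ := riseSum_apply_succ q (Nat.lt_of_succ_lt hp) (fallSum q f)
  have hrise₁ := riseSum_apply_succ q hp (fallSum q f)
  have hfall := fallSum_apply_succ q f p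
  simp only [transferOp, Module.End.mul_apply]
  linear_combination hrise₁ - q * hrise₀ - q ^ (p + 1) * hfall

theorem transferOp_single_one {L : ℕ} (hL : 0 < L) :
    transferOp q L (Pi.single 1 1) = q • transferOp q L (Pi.single 0 1) - q • Pi.single 0 1 := by
  have hfall := fallSum_single_succ q 0
  simp only [transferOp, Module.End.mul_apply, zero_add, pow_one] at hfall ⊢
  rw [hfall, map_sub, map_smul, map_smul, riseSum_single_zero q hL]

theorem transferOp_single_add_two {L p : ℕ} (hp : p + 1 < L) :
    transferOp q L (Pi.single (p + 2) 1) =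
      (q + q ^ 2) • transferOp q L (Pi.single (p + 1) 1) - q ^ 3 • transferOp q L (Pi.single p 1) -
        q ^ (2 * (p + 1) + 1) • Pi.single (p + 1) 1 := by
  have hfall (r : ℕ) := congrArg (riseSum q L) (fallSum_single_succ q r)
  have hrise := riseSum_single_succ q hp
  simp only [map_sub, map_smul] at hfall
  simp only [transferOp, Module.End.mul_apply]
  linear_combination (norm := module) hfall (p + 1) - q ^ 2 • hfall p - q ^ (p + 2) • hrise

theorem proj_comp_transferOp_sub_mem_span {L p : ℕ} (hp : p < L) :
    LinearMap.proj (p + 1) ∘ₗ transferOp q L - (-q ^ (2 * p)) • LinearMap.proj p ∈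
      Submodule.span R ((fun i => (LinearMap.proj i : Module.Dual R (ℕ → R)) ∘ₗ transferOp q L) ''
        Set.Iic p) := by
  set ρ : ℕ → Module.Dual R (ℕ → R) := fun i => LinearMap.proj i ∘ₗ transferOp q L
  have hmem (i : ℕ) (hi : i ≤ p) : ρ i ∈ Submodule.span R (ρ '' Set.Iic p) :=
    Submodule.subset_span (Set.mem_image_of_mem ρ hi)
  obtain _ | p := p
  · have hrec : ρ 1 - (-q ^ (2 * 0)) • LinearMap.proj 0 = ρ 0 :=
      LinearMap.ext fun f => by simp [ρ, transferOp_apply_one q hp f]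
    exact hrec ▸ hmem 0 le_rfl
  · have hrec : ρ (p + 2) - (-q ^ (2 * (p + 1))) • LinearMap.proj (p + 1) =
        (1 + q) • ρ (p + 1) - q • ρ p :=
      LinearMap.ext fun f => by simp [ρ, transferOp_apply_add_two q hp f]
    exact hrec ▸ Submodule.sub_mem _ (Submodule.smul_mem _ _ (hmem (p + 1) le_rfl))
      (Submodule.smul_mem _ _ (hmem p p.le_succ))

theorem transferOp_single_sub_mem_span {L p : ℕ} (hp : p < L) :
    transferOp q L (Pi.single (p + 1) 1) - (-q ^ (2 * p + 1)) • Pi.single p 1 ∈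
      Submodule.span R ((fun i => transferOp q L (Pi.single i 1)) '' Set.Iic p) := by
  have hmem (i : ℕ) (hi : i ≤ p) := Submodule.subset_span (R := R)
    (Set.mem_image_of_mem (fun i => transferOp q L (Pi.single i 1)) (Set.mem_Iic.2 hi))
  obtain _ | p := p
  · convert Submodule.smul_mem _ q (hmem 0 le_rfl) using 1
    simp [transferOp_single_one q hp]
  · convert Submodule.sub_mem _ (Submodule.smul_mem _ (q + q ^ 2) (hmem (p + 1) le_rfl))
      (Submodule.smul_mem _ (q ^ 3) (hmem p p.le_succ)) using 1
    rw [transferOp_single_add_two q hp, neg_smul, sub_neg_eq_add, sub_add_cancel]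

theorem prod_neg_pow_mul_prod_neg_pow (k : ℕ) :
    (∏ p : Fin k, ∏ s ∈ range p, -q ^ (2 * s + 1)) * (∏ p : Fin k, ∏ s ∈ range p, -q ^ (2 * s)) =
      q ^ ∑ p ∈ range k, p * (2 * p - 1) := by
  rw [Fin.prod_univ_eq_prod_range (fun p => ∏ s ∈ range p, -q ^ (2 * s + 1)),
    Fin.prod_univ_eq_prod_range (fun p => ∏ s ∈ range p, -q ^ (2 * s)), ← prod_mul_distrib,
    ← prod_pow_eq_pow_sum]
  congr 1 with p
  rw [← prod_mul_distrib]
  induction p with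
  | zero => simp
  | succ p ih =>
    rw [prod_range_succ, ih, neg_mul_neg, ← pow_add, ← pow_add]
    obtain _ | p := p
    · rfl
    · simp only [show ∀ r, 2 * (r + 1) - 1 = 2 * r + 1 by omega]
      ring

theorem det_transferOp_pow {k L : ℕ} (hkL : k ≤ L) (m : ℕ) :
    (Matrix.of fun i j : Fin k => (transferOp q L ^ (m + 2 * (k - 1))) (Pi.single j 1) i).det =
      q ^ (∑ p ∈ range k, p * (2 * p - 1)) *
        (Matrix.of fun i j : Fin k => (transferOp q L ^ (m + i + j)) (Pi.single 0 1) 0).det := by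
  rw [← prod_neg_pow_mul_prod_neg_pow]
  exact det_pow_eq_prod_mul_det_hankel (e := fun p => Pi.single p 1)
    (ε := fun p => (LinearMap.proj p : Module.Dual R (ℕ → R)))
    (fun p hp => transferOp_single_sub_mem_span q (by omega))
    (fun p hp => proj_comp_transferOp_sub_mem_span q (by omega)) m

end Operators

section Interlacing

variable {k : ℕ}

/-- `b 0 ≤ x 0 < b 1 ≤ x 1 < ⋯`: the `k` valleys `b` and the `k` peaks `x` at consecutive times of
a family of non-intersecting zigzag paths. -/
def Interlaces (b x : Fin k → ℕ) : Prop :=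
  ∀ p, b p ≤ x p ∧ ∀ p', p < p' → x p < b p'

theorem Interlaces.strictMono_left {b x : Fin k → ℕ} (h : Interlaces b x) : StrictMono b :=
  fun p p' hp => (h p).1.trans_lt ((h p).2 p' hp)

theorem Interlaces.strictMono_right {b x : Fin k → ℕ} (h : Interlaces b x) : StrictMono x :=
  fun p p' hp => ((h p).2 p' hp).trans_le (h p').1

/-- The configurations of `k` particles at positions below `L`. -/
def boxedStates (k L : ℕ) : Finset (Fin k → ℕ) :=
  Fintype.piFinset fun _ => range L

theorem mem_boxedStates {L : ℕ} {s : Fin k → ℕ} : s ∈ boxedStates k L ↔ ∀ p, s p < L := by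
  simp [boxedStates]

theorem monotone_snoc {L : ℕ} {b : Fin k → ℕ} (hb : StrictMono b) (hL : ∀ p, b p < L) :
    Monotone (Fin.snoc (α := fun _ => ℕ) b L) := by
  refine Fin.monotone_iff_le_succ.2 fun p => ?_
  rw [Fin.snoc_castSucc]
  obtain ⟨p', hp'⟩ | hp := Fin.eq_castSucc_or_eq_last p.succ
  · rw [hp', Fin.snoc_castSucc]
    exact hb.monotone (Fin.castSucc_le_castSucc_iff.1 (hp' ▸ Fin.castSucc_le_succ p))
  · rw [hp, Fin.snoc_last]
    exact (hL p).le

theorem monotone_cons_zero {x : Fin k → ℕ} (hx : Monotone x) :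
    Monotone (Fin.cons (α := fun _ => ℕ) 0 x) := by
  refine Fin.monotone_iff_le_succ.2 fun p => ?_
  rw [Fin.cons_succ]
  obtain hp | ⟨p', hp'⟩ := Fin.eq_zero_or_eq_succ p.castSucc
  · simp [hp]
  · rw [hp', Fin.cons_succ]
    exact hx (Fin.succ_le_succ_iff.1 (hp' ▸ Fin.castSucc_le_succ p))

theorem filter_interlaces_right {L : ℕ} {b : Fin k → ℕ} (hb : StrictMono b) (hL : ∀ p, b p < L) :
    (boxedStates k L).filter (Interlaces b) = Fintype.piFinset fun p =>
      Ico (Fin.snoc (α := fun _ => ℕ) b L p.castSucc) (Fin.snoc (α := fun _ => ℕ) b L p.succ) := by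
  ext x
  simp only [mem_filter, mem_boxedStates, Fintype.mem_piFinset, mem_Ico, Interlaces,
    ← forall_and]
  refine forall_congr' fun p => ⟨fun ⟨hxL, hbx, hxb⟩ => ⟨by simpa using hbx, ?_⟩,
    fun ⟨hbx, hxu⟩ => ⟨?_, by simpa using hbx, fun p' hp => ?_⟩⟩
  · obtain ⟨p', hp'⟩ | hp := Fin.eq_castSucc_or_eq_last p.succ
    · rw [hp', Fin.snoc_castSucc]
      exact hxb p' (Fin.castSucc_lt_castSucc_iff.1 (hp' ▸ Fin.castSucc_lt_succ))
    · rwa [hp, Fin.snoc_last]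
  · simpa using hxu.trans_le (monotone_snoc hb hL (Fin.le_last _))
  · simpa using hxu.trans_le (monotone_snoc hb hL (Fin.succ_le_castSucc_iff.2 hp))

theorem filter_interlaces_left {L : ℕ} {x : Fin k → ℕ} (hx : StrictMono x) (hL : ∀ p, x p < L) :
    (boxedStates k L).filter (Interlaces · x) = Fintype.piFinset fun p =>
      Ico (Fin.cons (α := fun _ => ℕ) 0 (fun p => x p + 1) p.castSucc)
        (Fin.cons (α := fun _ => ℕ) 0 (fun p => x p + 1) p.succ) := by
  have hu := monotone_cons_zero (hx.monotone.add_const 1)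
  ext b
  rw [mem_filter, mem_boxedStates, Fintype.mem_piFinset]
  simp only [mem_Ico, Fin.cons_succ, Nat.lt_succ_iff]
  constructor
  · rintro ⟨-, hbx⟩ p
    refine ⟨?_, (hbx p).1⟩
    obtain hp | ⟨p', hp'⟩ := Fin.eq_zero_or_eq_succ p.castSucc
    · simp [hp]
    · rw [hp', Fin.cons_succ]
      exact (hbx p').2 p (Fin.succ_le_castSucc_iff.1 hp'.ge)
  · intro h
    refine ⟨fun p => (h p).2.trans_lt (hL p), fun p => ⟨(h p).2, fun p' hp => ?_⟩⟩
    have hle := (hu (Fin.succ_le_castSucc_iff.2 hp)).trans (h p').1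
    rwa [Fin.cons_succ] at hle

end Interlacing

section InterlacingSums

variable {k : ℕ} {R : Type*} [CommRing R]

theorem pow_sum_mul_det (q : R) (f : ℕ → Fin k → R) (s : Fin k → ℕ) :
    q ^ (∑ p, s p) * (Matrix.of fun p => f (s p)).det =
      (Matrix.of fun p => q ^ s p • f (s p)).det := by
  rw [← prod_pow_eq_pow_sum, ← Matrix.det_mul_column]
  rfl

/- Summing over interlacing configurations acts entrywise: the sum of each row over its interval
becomes, after row operations, the sum over an interval common to all rows at one end. -/
theorem sum_interlaces_right (q : R) (f : Fin k → ℕ → R) {L : ℕ} {b : Fin k → ℕ}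
    (hb : StrictMono b) (hL : ∀ p, b p < L) :
    ∑ x ∈ (boxedStates k L).filter (Interlaces b),
        q ^ (∑ p, x p) * (Matrix.of fun p j => f j (x p)).det =
      (Matrix.of fun p j => riseSum q L (f j) (b p)).det := by
  simp_rw [pow_sum_mul_det q (fun z j => f j z), filter_interlaces_right hb hL]
  rw [sum_piFinset_det _ fun z => q ^ z • fun j => f j z,
    det_sum_Ico_eq_det_sum_Ico_top _ (monotone_snoc hb hL)]
  congr 1
  ext p j
  simp [riseSum_apply]

theorem sum_interlaces_left (q : R) (f : Fin k → ℕ → R) {L : ℕ} {x : Fin k → ℕ}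
    (hx : StrictMono x) (hL : ∀ p, x p < L) :
    ∑ b ∈ (boxedStates k L).filter (Interlaces · x),
        q ^ (∑ p, b p) * (Matrix.of fun p j => f j (b p)).det =
      (Matrix.of fun p j => fallSum q (f j) (x p)).det := by
  simp_rw [pow_sum_mul_det q (fun z j => f j z), filter_interlaces_left hx hL]
  rw [sum_piFinset_det _ fun z => q ^ z • fun j => f j z,
    det_sum_Ico_eq_det_sum_Ico_bot _ (monotone_cons_zero (hx.monotone.add_const 1))]
  congr 1
  ext p j
  simp [fallSum_apply]

theorem det_single_apply_of_strictMono {s : Fin k → ℕ} (hs : StrictMono s) :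
    (Matrix.of fun p j : Fin k => (Pi.single (j : ℕ) 1 : ℕ → R) (s p)).det =
      if s = Fin.val then 1 else 0 := by
  split_ifs with h
  · convert Matrix.det_one (n := Fin k) (R := R)
    ext p j
    simp [h, Matrix.one_apply, Pi.single_apply, Fin.ext_iff]
  · obtain ⟨p, hp⟩ : ∃ p, k ≤ s p := by
      by_contra! hlt
      let s' : Fin k → Fin k := fun p => ⟨s p, hlt p⟩
      have hs' : StrictMono s' := hs
      have hid : s' = id := hs'.range_inj strictMono_id |>.1 <| by
        rw [(Finite.surjective_of_injective hs'.injective).range_eq, Set.range_id]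
      exact h (funext fun p => congrArg Fin.val (congrFun hid p))
    refine Matrix.det_eq_zero_of_row_eq_zero p fun j => ?_
    simp [(j.2.trans_le hp).ne']

end InterlacingSums

section Walks

variable {S : Type*} [DecidableEq S] (P : ℕ → S → Finset S) (s₀ : S)

/-- The walks of length `t` from `s₀` to a given state, `P i s` being the finite set of states at
time `i` from which `s` can be reached at time `i + 1`. A walk is a sequence of states that stays
at its final state after time `t`. -/
def walks : ℕ → S → Finset (ℕ → S)
  | 0, s => if s = s₀ then {fun _ => s₀} else ∅
  | t + 1, s => (P t s).biUnion fun s' =>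
      (walks t s').image fun Y i => if i ≤ t then Y i else s

variable {P s₀}

theorem mem_walks {t : ℕ} {s : S} {Y : ℕ → S} :
    Y ∈ walks P s₀ t s ↔ Y 0 = s₀ ∧ (∀ i < t, Y i ∈ P i (Y (i + 1))) ∧ ∀ i ≥ t, Y i = s := by
  induction t generalizing s Y with
  | zero =>
    by_cases hs : s = s₀
    · simpa [walks, hs, funext_iff] using fun h : ∀ i, Y i = s₀ => h 0
    · simpa [walks, hs] using fun h0 : Y 0 = s₀ => ⟨0, fun h => hs (h.symm.trans h0)⟩
  | succ t ih =>
    simp only [walks, mem_biUnion, mem_image, ih]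
    constructor
    · rintro ⟨s', hs', Y, ⟨h0, hstep, hend⟩, rfl⟩
      refine ⟨by simpa using h0, fun i hi => ?_, fun i hi => if_neg (by omega)⟩
      obtain hi | rfl := Nat.lt_succ_iff_lt_or_eq.1 hi
      · simpa [hi.le, Nat.succ_le_of_lt hi] using hstep i hi
      · simpa [hend] using hs'
    · rintro ⟨h0, hstep, hend⟩
      refine ⟨Y t, ?_, fun i => if i ≤ t then Y i else Y t, ⟨by simpa using h0, fun i hi => ?_,
        fun i hi => ?_⟩, ?_⟩
      · simpa [hend] using hstep t t.lt_succ_self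
      · simpa [hi.le, Nat.succ_le_of_lt hi] using hstep i (hi.trans t.lt_succ_self)
      · obtain rfl | hi := hi.eq_or_lt
        · simp
        · simp [hi.not_ge]
      · ext1 i
        by_cases hi : i ≤ t
        · simp [hi]
        · simp [hi, hend i (by omega)]

theorem sum_walks_succ {R : Type*} [CommSemiring R] (w : S → R) (t : ℕ) (s : S) :
    ∑ Y ∈ walks P s₀ (t + 1) s, ∏ i ∈ range (t + 1), w (Y i) =
      ∑ s' ∈ P t s, w s' * ∑ Y ∈ walks P s₀ t s', ∏ i ∈ range t, w (Y i) := by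
  rw [walks, sum_biUnion]
  · refine sum_congr rfl fun s' _ => ?_
    rw [sum_image, mul_sum]
    · refine sum_congr rfl fun Y hY => ?_
      simp only [prod_range_succ, le_refl, if_true, (mem_walks.1 hY).2.2 t le_rfl]
      rw [mul_comm]
      congr 1
      exact prod_congr rfl fun i hi => by rw [if_pos (mem_range.1 hi).le]
    · intro Y hY Z hZ hYZ
      ext1 i
      obtain hi | hi := le_total i t
      · simpa [hi] using congrFun hYZ i
      · rw [(mem_walks.1 hY).2.2 i hi, (mem_walks.1 hZ).2.2 i hi]
  · intro s' _ s'' _ hne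
    refine disjoint_left.2 fun Y hY' hY'' => hne ?_
    obtain ⟨Z', hZ', rfl⟩ := mem_image.1 hY'
    obtain ⟨Z'', hZ'', hY⟩ := mem_image.1 hY''
    have ht := congrFun hY t
    simp only [le_refl, if_true] at ht
    rw [← (mem_walks.1 hZ').2.2 t le_rfl, ← (mem_walks.1 hZ'').2.2 t le_rfl, ht]

theorem sum_walks_eq {R : Type*} [CommSemiring R] {w : S → R} {g : ℕ → S → R} {V : S → Prop}
    (hbase : ∀ s, V s → g 0 s = if s = s₀ then 1 else 0)
    (hV : ∀ t s, ∀ s' ∈ P t s, V s')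
    (hstep : ∀ t s, V s → ∑ s' ∈ P t s, w s' * g t s' = g (t + 1) s) (t : ℕ) {s : S} (hs : V s) :
    ∑ Y ∈ walks P s₀ t s, ∏ i ∈ range t, w (Y i) = g t s := by
  induction t generalizing s with
  | zero =>
    rw [hbase s hs, walks]
    split_ifs <;> simp
  | succ t ih =>
    rw [sum_walks_succ, ← hstep t s hs]
    exact sum_congr rfl fun s' hs' => by rw [ih (hV t s s' hs')]

end Walks

section InterlacingWalks

variable {k : ℕ}

/-- A step of a family of zigzag paths: times alternate between valleys (even) and peaks (odd). -/
def IsZigzagStep (t : ℕ) (s s' : Fin k → ℕ) : Prop :=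
  if Even t then Interlaces s s' else Interlaces s' s

/-- The families of `k` non-intersecting zigzag paths with `N` peaks, from heights
`0, …, k - 1` back to the same heights, continued by constant paths. -/
def zigzagFamilies (k N : ℕ) : Set (ℕ → Fin k → ℕ) :=
  {Y | Y 0 = Fin.val ∧ (∀ t < 2 * N, IsZigzagStep t (Y t) (Y (t + 1))) ∧
    ∀ t ≥ 2 * N, Y t = Fin.val}

/-- The area under a family of zigzag paths. -/
def area (N : ℕ) (Y : ℕ → Fin k → ℕ) : ℕ := ∑ t ∈ range (2 * N), ∑ p, Y t p

/-- The zigzag families whose heights are below `L`. -/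
def boxedFamilies (k N L : ℕ) : Finset (ℕ → Fin k → ℕ) :=
  walks (fun t s => (boxedStates k L).filter (IsZigzagStep t · s)) Fin.val (2 * N) Fin.val

theorem sum_boxedFamilies {R : Type*} [CommRing R] (q : R) {L : ℕ} (hkL : k ≤ L) (N : ℕ) :
    ∑ Y ∈ boxedFamilies k N L, q ^ area N Y =
      (Matrix.of fun i j : Fin k => (transferOp q L ^ N) (Pi.single j 1) i).det := by
  let f : ℕ → Fin k → ℕ → R := fun t j =>
    if Even t then (transferOp q L ^ (t / 2)) (Pi.single j 1)
    else fallSum q ((transferOp q L ^ (t / 2)) (Pi.single j 1))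
  have hsum := sum_walks_eq (R := R) (P := fun t s => (boxedStates k L).filter (IsZigzagStep t · s))
    (s₀ := (Fin.val : Fin k → ℕ)) (w := fun s => q ^ ∑ p, s p)
    (V := fun s => StrictMono s ∧ ∀ p, s p < L)
    (g := fun t s => (Matrix.of fun p j => f t j (s p)).det)
    (fun s hs => by simpa [f] using det_single_apply_of_strictMono (R := R) hs.1)
    (fun t s s' hs' => ?_) (fun t s hs => ?_) (2 * N)
    ⟨Fin.val_strictMono, fun p => p.2.trans_le hkL⟩
  · simpa [f, boxedFamilies, area, prod_pow_eq_pow_sum] using hsum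
  · rw [mem_filter, mem_boxedStates, IsZigzagStep] at hs'
    refine ⟨?_, hs'.1⟩
    split_ifs at hs'
    exacts [hs'.2.strictMono_left, hs'.2.strictMono_right]
  · obtain ⟨r, rfl | rfl⟩ := t.even_or_odd'
    · have hr : (2 * r + 1) / 2 = r := by omega
      simpa [f, IsZigzagStep, hr] using sum_interlaces_left q (f (2 * r)) hs.1 hs.2
    · have hr : (2 * r + 1) / 2 = r := by omega
      have hr' : (2 * r + 1 + 1) / 2 = r + 1 := by omega
      have hf (j) : f (2 * r + 1 + 1) j = riseSum q L (f (2 * r + 1) j) := by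
        simp [f, hr, hr', Nat.even_add_one, pow_succ', transferOp]
      simpa [hf, IsZigzagStep] using sum_interlaces_right q (f (2 * r + 1)) hs.1 hs.2

theorem mem_boxedFamilies {N L : ℕ} {Y : ℕ → Fin k → ℕ} :
    Y ∈ boxedFamilies k N L ↔ Y ∈ zigzagFamilies k N ∧ ∀ t < 2 * N, ∀ p, Y t p < L := by
  simp only [boxedFamilies, zigzagFamilies, mem_walks, mem_filter, mem_boxedStates,
    Set.mem_ofPred_eq]
  grind

theorem coeff_weightGF_zigzagFamilies {L M : ℕ} (hkL : k ≤ L) (hML : M < L) (N : ℕ) :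
    PowerSeries.coeff M (weightGF (zigzagFamilies k N) (area N)) =
      PowerSeries.coeff M (Matrix.of fun i j : Fin k =>
        (transferOp (PowerSeries.X : PowerSeries ℚ) L ^ N) (Pi.single j 1) i).det := by
  rw [← sum_boxedFamilies _ hkL]
  refine coeff_weightGF_eq_coeff_sum fun Y hY => ?_
  rw [mem_boxedFamilies, iff_self_and]
  intro _ t ht p
  calc Y t p ≤ ∑ p, Y t p := single_le_sum (fun _ _ => Nat.zero_le _) (mem_univ p)
    _ ≤ area N Y := single_le_sum (f := fun t => ∑ p, Y t p) (fun _ _ => Nat.zero_le _)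
      (mem_range.2 ht)
    _ < L := hY ▸ hML

end InterlacingWalks

section ThickStrip

variable {n k : ℕ}

/-- The cells of the thick strip `δ_{n+2k}/δ_n`. -/
def stripCells (n k : ℕ) : Finset (ℕ × ℕ) := deltaCells (n + 2 * k) \ deltaCells n

theorem mem_stripCells {i j : ℕ} :
    (i, j) ∈ stripCells n k ↔ 1 ≤ i ∧ 1 ≤ j ∧ n < i + j ∧ i + j ≤ n + 2 * k := by
  simp only [stripCells, deltaCells, mem_sdiff, mem_filter, mem_product, mem_Icc]
  omega

/-- The cell whose entry determines the position of particle `p` at time `t`: times run along the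
contents of the strip, particles along its diagonals. Truncated subtraction gives a zero coordinate,
hence a cell outside the strip, where the position of the particle is forced. -/
def cellOf (n k t p : ℕ) : ℕ × ℕ := (p + 1 + (t + 1) / 2 - k, n + p + k - t / 2)

/-- The time at which the content diagonal of a cell is read. -/
def timeOf (n k : ℕ) (c : ℕ × ℕ) : ℕ := n + 2 * k - 1 + c.1 - c.2

/-- The particle whose position is determined by a cell. -/
def particleOf (n : ℕ) (c : ℕ × ℕ) : ℕ := (c.1 + c.2 - n - 1) / 2

theorem cellOf_mem_stripCells_iff {t p : ℕ} (hp : p < k) :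
    cellOf n k t p ∈ stripCells n k ↔ k < p + 1 + (t + 1) / 2 ∧ t / 2 < n + p + k := by
  rw [cellOf, mem_stripCells]
  omega

theorem particleOf_lt {c : ℕ × ℕ} (hc : c ∈ stripCells n k) : particleOf n c < k := by
  have hc' := mem_stripCells.1 hc
  rw [particleOf]
  omega

theorem timeOf_lt {c : ℕ × ℕ} (hc : c ∈ stripCells n k) :
    timeOf n k c < 2 * (n + 2 * k - 1) := by
  have hc' := mem_stripCells.1 hc
  rw [timeOf]
  omega

theorem cellOf_timeOf_particleOf {c : ℕ × ℕ} (hc : c ∈ stripCells n k) :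
    cellOf n k (timeOf n k c) (particleOf n c) = c := by
  have hc' := mem_stripCells.1 hc
  rw [cellOf, timeOf, particleOf, Prod.ext_iff]
  constructor <;> simp only <;> omega

theorem timeOf_cellOf {t p : ℕ} (hp : p < k) (hc : cellOf n k t p ∈ stripCells n k) :
    timeOf n k (cellOf n k t p) = t := by
  rw [cellOf_mem_stripCells_iff hp] at hc
  simp only [timeOf, cellOf]
  omega

theorem particleOf_cellOf {t p : ℕ} (hp : p < k) (hc : cellOf n k t p ∈ stripCells n k) :
    particleOf n (cellOf n k t p) = p := by
  rw [cellOf_mem_stripCells_iff hp] at hc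
  simp only [particleOf, cellOf]
  omega

theorem interlaces_of_forall_succ {b x : Fin k → ℕ} (hle : ∀ p, b p ≤ x p)
    (hlt : ∀ (p : ℕ) (hp : p + 1 < k), x ⟨p, by omega⟩ < b ⟨p + 1, hp⟩) : Interlaces b x := by
  rintro ⟨p, hp⟩
  refine ⟨hle _, ?_⟩
  rintro ⟨p', hp'⟩ hpp'
  replace hpp' : p + 1 ≤ p' := hpp'
  induction p', hpp' using Nat.le_induction with
  | base => exact hlt p hp'
  | succ p' _ ih => exact (ih (by omega)).trans_le ((hle _).trans (hlt p' hp').le)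

/-- The positions of the particles encoding a filling of the strip: entries of a diagonal are
shifted so that they become distinct. -/
def particlesOf (n k : ℕ) (f : ℕ × ℕ → ℕ) (t : ℕ) (p : Fin k) : ℕ := f (cellOf n k t p) + p

theorem IsRPP.apply_cellOf_le {f : ℕ × ℕ → ℕ} (hf : IsRPP (stripCells n k) f) {t t' p p' : ℕ}
    (hp : p < k) (hp' : p' < k) (ht : t' = t + 1 ∨ t = t' + 1)
    (hpp' : p' = if Even t then p else p + 1) :
    f (cellOf n k t p) ≤ f (cellOf n k t' p') := by
  by_cases hmem : cellOf n k t p ∈ stripCells n k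
  · have hmem' : cellOf n k t' p' ∈ stripCells n k := by
      rw [cellOf_mem_stripCells_iff] at hmem ⊢ <;> grind
    have hcell : cellOf n k t' p' = ((cellOf n k t p).1, (cellOf n k t p).2 + 1) ∨
        cellOf n k t' p' = ((cellOf n k t p).1 + 1, (cellOf n k t p).2) := by
      rw [cellOf_mem_stripCells_iff hp] at hmem
      simp only [cellOf, Prod.mk.injEq]
      grind
    rcases hcell with hcell | hcell <;> rw [hcell] at hmem' ⊢
    · exact hf.2.1 _ _ hmem hmem'
    · exact hf.2.2 _ _ hmem hmem'
  · simp [hf.1 _ hmem]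

theorem isZigzagStep_particlesOf {f : ℕ × ℕ → ℕ} (hf : IsRPP (stripCells n k) f) (t : ℕ) :
    IsZigzagStep t (particlesOf n k f t) (particlesOf n k f (t + 1)) := by
  rw [IsZigzagStep]
  split_ifs with ht
  all_goals
    refine interlaces_of_forall_succ
      (fun p => Nat.add_le_add_right (hf.apply_cellOf_le p.2 p.2 ?_ ?_) _)
      fun p hp => Nat.lt_succ_of_le
        (Nat.add_le_add_right (hf.apply_cellOf_le (Nat.lt_of_succ_lt hp) hp ?_ ?_) p)
  all_goals simp [Nat.even_add_one, ht]

theorem particlesOf_mem_zigzagFamilies {f : ℕ × ℕ → ℕ} (hf : IsRPP (stripCells n k) f) :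
    particlesOf n k f ∈ zigzagFamilies k (n + 2 * k - 1) := by
  have hforced {t : ℕ} (ht : t = 0 ∨ 2 * (n + 2 * k - 1) ≤ t) :
      particlesOf n k f t = Fin.val := by
    funext p
    rw [particlesOf, hf.1 _ (by rw [cellOf_mem_stripCells_iff p.2]; omega), zero_add]
  exact ⟨hforced (.inl rfl), fun t _ => isZigzagStep_particlesOf hf t,
    fun t ht => hforced (.inr ht)⟩

theorem val_le_of_mem_zigzagFamilies {N : ℕ} {Y : ℕ → Fin k → ℕ} (hY : Y ∈ zigzagFamilies k N)
    (t : ℕ) (p : Fin k) : (p : ℕ) ≤ Y t p := by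
  have hmono : StrictMono (Y t) := by
    rcases lt_or_ge t (2 * N) with ht | ht
    · have hstep := hY.2.1 t ht
      rw [IsZigzagStep] at hstep
      split_ifs at hstep
      exacts [hstep.strictMono_left, hstep.strictMono_right]
    · rw [hY.2.2 t ht]
      exact Fin.val_strictMono
  obtain ⟨p, hp⟩ := p
  induction p with
  | zero => exact Nat.zero_le _
  | succ p ih => exact (ih (by omega)).trans_lt (hmono (Nat.lt_succ_self p))

theorem apply_sub_val_le_of_mem_zigzagFamilies {N : ℕ} {Y : ℕ → Fin k → ℕ}
    (hY : Y ∈ zigzagFamilies k N) {t t' : ℕ} {p p' : Fin k} (ht : t' = t + 1 ∨ t = t' + 1)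
    (htN : t ≤ 2 * N) (htN' : t' ≤ 2 * N) (hpp' : (p' : ℕ) = if Even t then (p : ℕ) else p + 1) :
    Y t p - p ≤ Y t' p' - p' := by
  have hstep : if Even t then Interlaces (Y t) (Y t') else Interlaces (Y t') (Y t) := by
    rcases ht with rfl | rfl
    · exact hY.2.1 t (by omega)
    · have hstep := hY.2.1 t' (by omega)
      rw [IsZigzagStep] at hstep
      simpa only [Nat.even_add_one, ite_not] using hstep
  split_ifs at hstep hpp'
  · obtain rfl := Fin.ext hpp'
    exact Nat.sub_le_sub_right (hstep _).1 _
  · have hlt := (hstep p).2 p' (Fin.lt_def.2 (by omega))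
    omega

theorem eq_val_of_cellOf_notMem {Y : ℕ → Fin k → ℕ} (hY : Y ∈ zigzagFamilies k (n + 2 * k - 1))
    {t : ℕ} {p : Fin k} (hc : cellOf n k t p ∉ stripCells n k) : Y t p = p := by
  refine le_antisymm (Nat.sub_eq_zero_iff_le.1 ?_) (val_le_of_mem_zigzagFamilies hY t p)
  rw [cellOf_mem_stripCells_iff p.2, not_and_or, not_lt, not_lt] at hc
  rcases hc with hc | hc
  · induction t generalizing p with
    | zero => simp [hY.1]
    | succ t ih =>
      have hp' : (if Even (t + 1) then (p : ℕ) else p + 1) < k := by grind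
      refine Nat.eq_zero_of_le_zero ((apply_sub_val_le_of_mem_zigzagFamilies hY (t' := t)
        (p' := ⟨_, hp'⟩) (.inr rfl) (by omega) (by omega) rfl).trans_eq (ih ?_))
      grind
  · obtain ⟨d, hd⟩ : ∃ d, 2 * (n + 2 * k - 1) ≤ t + d := ⟨_, Nat.le_add_left _ _⟩
    induction d generalizing t p with
    | zero => simp [hY.2.2 t hd]
    | succ d ih =>
      rcases le_or_gt (2 * (n + 2 * k - 1)) t with ht | ht
      · simp [hY.2.2 t ht]
      have hp' : (if Even t then (p : ℕ) else p + 1) < k := by grind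
      refine Nat.eq_zero_of_le_zero ((apply_sub_val_le_of_mem_zigzagFamilies hY (t' := t + 1)
        (p' := ⟨_, hp'⟩) (.inl rfl) ht.le ht rfl).trans_eq (ih ?_ (by omega)))
      grind

/-- The filling of the strip encoded by a family of zigzag paths. -/
def fillingOf (n k : ℕ) (Y : ℕ → Fin k → ℕ) (c : ℕ × ℕ) : ℕ :=
  if hc : c ∈ stripCells n k then
    Y (timeOf n k c) ⟨particleOf n c, particleOf_lt hc⟩ - particleOf n c
  else 0

theorem fillingOf_cellOf {Y : ℕ → Fin k → ℕ} (hY : Y ∈ zigzagFamilies k (n + 2 * k - 1))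
    (t : ℕ) (p : Fin k) : fillingOf n k Y (cellOf n k t p) = Y t p - p := by
  rw [fillingOf]
  split_ifs with hc
  · simp only [timeOf_cellOf p.2 hc, particleOf_cellOf p.2 hc]
  · rw [eq_val_of_cellOf_notMem hY hc, Nat.sub_self]

theorem fillingOf_le {Y : ℕ → Fin k → ℕ} (hY : Y ∈ zigzagFamilies k (n + 2 * k - 1))
    {c c' : ℕ × ℕ} (hc : c ∈ stripCells n k) (hc' : c' ∈ stripCells n k)
    (hcc' : c' = (c.1, c.2 + 1) ∨ c' = (c.1 + 1, c.2)) :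
    fillingOf n k Y c ≤ fillingOf n k Y c' := by
  rw [fillingOf, fillingOf, dif_pos hc, dif_pos hc']
  have ht := timeOf_lt hc
  have ht' := timeOf_lt hc'
  refine apply_sub_val_le_of_mem_zigzagFamilies hY ?_ ht.le ht'.le ?_
  all_goals
    obtain ⟨i, j⟩ := c
    rw [mem_stripCells] at hc
    rcases hcc' with rfl | rfl <;> rw [mem_stripCells] at hc' <;> simp only [timeOf, particleOf]
    all_goals grind

theorem isRPP_fillingOf {Y : ℕ → Fin k → ℕ} (hY : Y ∈ zigzagFamilies k (n + 2 * k - 1)) :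
    IsRPP (stripCells n k) (fillingOf n k Y) :=
  ⟨fun _ hc => dif_neg hc, fun _ _ hc hc' => fillingOf_le hY hc hc' (.inl rfl),
    fun _ _ hc hc' => fillingOf_le hY hc hc' (.inr rfl)⟩

theorem bijOn_particlesOf (n k : ℕ) :
    Set.BijOn (particlesOf n k) {f | IsRPP (stripCells n k) f}
      (zigzagFamilies k (n + 2 * k - 1)) := by
  refine Set.InvOn.bijOn (f' := fillingOf n k) ⟨fun f hf => ?_, fun Y hY => ?_⟩
    (fun f hf => particlesOf_mem_zigzagFamilies hf) fun Y hY => isRPP_fillingOf hY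
  · funext c
    by_cases hc : c ∈ stripCells n k
    · rw [fillingOf, dif_pos hc, particlesOf, cellOf_timeOf_particleOf hc, Nat.add_sub_cancel]
    · rw [fillingOf, dif_neg hc, hf.1 c hc]
  · funext t p
    rw [particlesOf, fillingOf_cellOf hY, Nat.sub_add_cancel (val_le_of_mem_zigzagFamilies hY t p)]

theorem area_particlesOf {f : ℕ × ℕ → ℕ} (hf : IsRPP (stripCells n k) f) :
    area (n + 2 * k - 1) (particlesOf n k f) =
      2 * (n + 2 * k - 1) * (∑ p ∈ range k, p) + ∑ c ∈ stripCells n k, f c := by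
  have hentries : ∑ x ∈ range (2 * (n + 2 * k - 1)) ×ˢ (univ : Finset (Fin k)),
      f (cellOf n k x.1 x.2) = ∑ c ∈ stripCells n k, f c := by
    refine (sum_bij_ne_zero (fun c hc _ => (timeOf n k c, ⟨particleOf n c, particleOf_lt hc⟩))
      (fun c hc _ => ?_) (fun c hc _ c' hc' _ h => ?_) (fun x _ hx => ?_) fun c hc _ => ?_).symm
    · simpa using timeOf_lt hc
    · simp only [Prod.mk.injEq, Fin.mk.injEq] at h
      rw [← cellOf_timeOf_particleOf hc, ← cellOf_timeOf_particleOf hc', h.1, h.2]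
    · have hc : cellOf n k x.1 x.2 ∈ stripCells n k := not_not.1 (mt (hf.1 _) hx)
      exact ⟨_, hc, hx, Prod.ext (timeOf_cellOf x.2.2 hc)
        (Fin.ext (particleOf_cellOf x.2.2 hc))⟩
    · rw [cellOf_timeOf_particleOf hc]
  simp only [area, particlesOf, sum_add_distrib, sum_const, card_range, smul_eq_mul,
    Fin.sum_univ_eq_sum_range fun p => p]
  rw [← hentries, sum_product, add_comm]

end ThickStrip

section HankelDeterminant

open PowerSeries

theorem weightGF_zigzagFamilies_eq (n k : ℕ) :
    weightGF (zigzagFamilies k (n + 2 * k - 1)) (area (n + 2 * k - 1)) =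
      X ^ (2 * (n + 2 * k - 1) * ∑ p ∈ range k, p) * rppGF (stripCells n k) :=
  weightGF_eq_X_pow_mul_of_bijOn (bijOn_particlesOf n k) fun _ hf => area_particlesOf hf

theorem X_pow_dvd_rppGF_stripCells_sub_det {n k L : ℕ} (hkL : k ≤ L) :
    (X : PowerSeries ℚ) ^ L ∣
      X ^ (2 * (n + 2 * k - 1) * ∑ p ∈ range k, p) * rppGF (stripCells n k) -
        (Matrix.of fun i j : Fin k =>
          (transferOp X L ^ (n + 2 * k - 1)) (Pi.single j 1) i).det := by
  refine X_pow_dvd_iff.2 fun M hM => ?_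
  rw [map_sub, ← weightGF_zigzagFamilies_eq, coeff_weightGF_zigzagFamilies hkL hM, sub_self]

theorem X_pow_dvd_rppGF_borderStrip_sub {m L : ℕ} (hL : 0 < L) :
    (X : PowerSeries ℚ) ^ L ∣
      rppGF (stripCells m 1) - (transferOp X L ^ (m + 1)) (Pi.single 0 1) 0 := by
  simpa using X_pow_dvd_rppGF_stripCells_sub_det (n := m) (k := 1) hL

theorem X_pow_mul_rppGF_stripCells_eq_X_pow_mul_det {n k : ℕ} (hk : 0 < k) :
    X ^ (2 * (n + 2 * k - 1) * ∑ p ∈ range k, p) * rppGF (stripCells n k) =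
      X ^ (∑ p ∈ range k, p * (2 * p - 1)) *
        (Matrix.of fun i j : Fin k => rppGF (stripCells (n + i + j) 1)).det := by
  ext M
  rw [← sub_eq_zero, ← map_sub]
  refine X_pow_dvd_iff.1 ?_ M (by omega : M < M + k)
  have hthick := X_pow_dvd_rppGF_stripCells_sub_det (n := n) (k := k) (Nat.le_add_left k M)
  rw [show n + 2 * k - 1 = n + 1 + 2 * (k - 1) by omega] at hthick ⊢
  rw [det_transferOp_pow _ (Nat.le_add_left k M)] at hthick
  have hborder := dvd_det_sub_det (a := (X : PowerSeries ℚ) ^ (M + k))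
    (A := Matrix.of fun i j : Fin k => rppGF (stripCells (n + i + j) 1))
    (B := Matrix.of fun i j : Fin k =>
      (transferOp X (M + k) ^ (n + 1 + i + j)) (Pi.single 0 1) 0) fun i j => by
    simpa only [Matrix.of_apply, add_right_comm _ _ 1] using
      X_pow_dvd_rppGF_borderStrip_sub (m := n + i + j) (by omega : 0 < M + k)
  convert dvd_sub hthick (hborder.mul_left (X ^ ∑ p ∈ range k, p * (2 * p - 1))) using 1
  ring

theorem six_mul_sum_range_succ_mul_two_mul_sub_one (k : ℕ) :
    6 * ∑ p ∈ range (k + 1), p * (2 * p - 1) + k * (k + 1) = 4 * (k * (k * (k + 1))) := by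
  induction k with
  | zero => rfl
  | succ k ih =>
    rw [sum_range_succ, show 2 * (k + 1) - 1 = 2 * k + 1 by omega]
    linarith

theorem two_mul_mul_sum_range_eq (n k : ℕ) :
    2 * (n + 2 * k - 1) * ∑ p ∈ range k, p =
      k * (k - 1) * (6 * n + 8 * k - 1) / 6 + ∑ p ∈ range k, p * (2 * p - 1) := by
  rcases k with _ | k
  · simp
  have hodd := six_mul_sum_range_succ_mul_two_mul_sub_one k
  have hid := sum_range_id_mul_two (k + 1)
  have hdiff : (k + 1) * k * (6 * n + 8 * k + 7) + 6 * ∑ p ∈ range (k + 1), p * (2 * p - 1) =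
      6 * (2 * (n + 2 * k + 1) * ∑ p ∈ range (k + 1), p) := by
    rw [Nat.add_sub_cancel] at hid
    linear_combination hodd - 6 * (n + 2 * k + 1) * hid
  rw [Nat.add_sub_cancel, show 6 * n + 8 * (k + 1) - 1 = 6 * n + 8 * k + 7 by omega,
    show n + 2 * (k + 1) - 1 = n + 2 * k + 1 by omega]
  omega

theorem X_pow_mul_rppGF_stripCells {n k : ℕ} (hk : 0 < k) :
    X ^ (k * (k - 1) * (6 * n + 8 * k - 1) / 6) * rppGF (stripCells n k) =
      (Matrix.of fun i j : Fin k => rppGF (stripCells (n + i + j) 1)).det := by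
  have hthick := X_pow_mul_rppGF_stripCells_eq_X_pow_mul_det (n := n) hk
  rw [two_mul_mul_sum_range_eq, pow_add, mul_assoc, mul_left_comm] at hthick
  exact mul_left_cancel₀ (pow_ne_zero _ X_ne_zero) hthick

end HankelDeterminant

section TupleGeneratingFunctions

open PowerSeries

variable {N : ℕ}

/-- The generating function of a set of tuples of natural numbers by the sum of their entries. -/
def tupleGF (s : Set (Fin N → ℕ)) : PowerSeries ℚ := weightGF s fun g => ∑ i, g i

theorem finite_setOf_mem_sum_eq (s : Set (Fin N → ℕ)) (M : ℕ) :
    {g ∈ s | ∑ i, g i = M}.Finite :=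
  (piAntidiag univ M).finite_toSet.subset fun g hg => by simpa [mem_piAntidiag] using hg.2

theorem bijOn_snoc_zero_antitone :
    Set.BijOn (fun g : Fin N → ℕ => (Fin.snoc g 0 : Fin (N + 1) → ℕ)) {g | Antitone g}
      {g ∈ {g | Antitone g} | g (Fin.last N) = 0} := by
  refine Set.InvOn.bijOn (f' := Fin.init) ⟨fun g _ => Fin.init_snoc .., fun g hg => ?_⟩
    (fun g hg => ⟨fun i j hij => ?_, Fin.snoc_last ..⟩)
    fun g hg i j hij => hg.1 (Fin.castSucc_le_castSucc_iff.2 hij)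
  · simpa only [hg.2] using Fin.snoc_init_self g
  · induction j using Fin.lastCases with
    | last => simp
    | cast j =>
      induction i using Fin.lastCases with
      | last => exact absurd hij (Fin.castSucc_lt_last j).not_ge
      | cast i => simpa only [Fin.snoc_castSucc] using hg (Fin.castSucc_le_castSucc_iff.1 hij)

theorem bijOn_add_one_antitone :
    Set.BijOn (fun g : Fin (N + 1) → ℕ => g + 1) {g | Antitone g}
      {g ∈ {g | Antitone g} | g (Fin.last N) ≠ 0} := by
  refine Set.InvOn.bijOn (f' := fun g => g - 1) ⟨fun g _ => ?_, fun g hg => ?_⟩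
    (fun g hg => ⟨fun i j hij => Nat.add_le_add_right (hg hij) 1, Nat.succ_ne_zero _⟩)
    fun g hg i j hij => Nat.sub_le_sub_right (hg.1 hij) 1
  · exact add_tsub_cancel_right g 1
  · exact tsub_add_cancel_of_le fun i =>
      (Nat.one_le_iff_ne_zero.2 hg.2).trans (hg.1 (Fin.le_last i))

theorem tupleGF_antitone_succ (N : ℕ) :
    tupleGF {g : Fin (N + 1) → ℕ | Antitone g} =
      tupleGF {g : Fin N → ℕ | Antitone g} +
        X ^ (N + 1) * tupleGF {g : Fin (N + 1) → ℕ | Antitone g} := by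
  have hzero : tupleGF {g ∈ {g : Fin (N + 1) → ℕ | Antitone g} | g (Fin.last N) = 0} =
      tupleGF {g : Fin N → ℕ | Antitone g} :=
    weightGF_congr_of_bijOn bijOn_snoc_zero_antitone fun g _ => by simp [Fin.sum_univ_castSucc]
  have hpos : tupleGF {g ∈ {g : Fin (N + 1) → ℕ | Antitone g} | g (Fin.last N) ≠ 0} =
      X ^ (N + 1) * tupleGF {g : Fin (N + 1) → ℕ | Antitone g} :=
    weightGF_eq_X_pow_mul_of_bijOn bijOn_add_one_antitone fun g _ => by
      simp [sum_add_distrib, add_comm]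
  rw [← hzero, ← hpos]
  refine (weightGF_eq_sum_fiber (finite_setOf_mem_sum_eq _)
    fun g => decide (g (Fin.last N) = 0)).trans ?_
  simp only [Fintype.sum_bool, decide_eq_true_eq, decide_eq_false_iff_not]
  rfl

theorem tupleGF_antitone_mul_pochPS (N : ℕ) :
    tupleGF {g : Fin N → ℕ | Antitone g} * pochPS N = 1 := by
  induction N with
  | zero =>
    have htuple : tupleGF {g : Fin 0 → ℕ | Antitone g} = 1 := by
      ext M
      rw [tupleGF, coeff_weightGF_eq_coeff_sum (t := {0}) fun g _ => by
        simp [Subsingleton.antitone, Subsingleton.elim g 0]]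
      simp
    rw [htuple, pochPS, Icc_eq_empty_of_lt one_pos, prod_empty, one_mul]
  | succ N ih =>
    rw [← ih, pochPS, prod_Icc_succ_top (Nat.le_add_left 1 N), ← pochPS]
    linear_combination pochPS N * tupleGF_antitone_succ N

end TupleGeneratingFunctions

section DescentShifts

open PowerSeries

/-- The number of descents of a word of length `N` that are greater than `s`. -/
def descentsAbove (N : ℕ) (w : ℕ → ℕ) (s : ℕ) : ℕ :=
  ∑ i ∈ Ico (s + 1) N, if w (i + 1) < w i then 1 else 0

theorem sum_descentsAbove (N : ℕ) (w : ℕ → ℕ) : ∑ s : Fin N, descentsAbove N w s = majW N w := by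
  rw [← sum_range (f := fun s => descentsAbove N w s), majW]
  simp only [descentsAbove]
  rw [sum_comm' (t' := Icc 1 (N - 1)) (s' := fun i => range i)]
  · simp
  · simp only [mem_range, mem_Ico, mem_Icc]
    omega

theorem descentsAbove_eq_add {N : ℕ} (w : ℕ → ℕ) {s : ℕ} (hs : s + 1 < N) :
    descentsAbove N w s =
      (if w (s + 2) < w (s + 1) then 1 else 0) + descentsAbove N w (s + 1) := by
  rw [descentsAbove, sum_eq_sum_Ico_succ_bot hs, descentsAbove]

variable {n : ℕ}

/-- The tuples compatible with a word: weakly decreasing, and strictly so at its descents. -/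
def compatibleTuples (n : ℕ) (w : ℕ → ℕ) : Set (Fin (n + 1) → ℕ) :=
  {g | ∀ i : Fin n, g i.succ + (if w (i + 2) < w (i + 1) then 1 else 0) ≤ g i.castSucc}

theorem descentsAbove_le_of_mem_compatibleTuples {w : ℕ → ℕ} {g : Fin (n + 1) → ℕ}
    (hg : g ∈ compatibleTuples n w) (s : Fin (n + 1)) : descentsAbove (n + 1) w s ≤ g s := by
  induction s using Fin.reverseInduction with
  | last => simp [descentsAbove]
  | cast i ih =>
    have hstep := descentsAbove_eq_add (N := n + 1) w (Nat.succ_lt_succ i.isLt)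
    have hgi := hg i
    simp only [Fin.val_succ, Fin.val_castSucc] at *
    omega

theorem bijOn_add_descentsAbove (n : ℕ) (w : ℕ → ℕ) :
    Set.BijOn (fun (g : Fin (n + 1) → ℕ) s => g s + descentsAbove (n + 1) w s) {g | Antitone g}
      (compatibleTuples n w) := by
  have hstep (i : Fin n) := descentsAbove_eq_add (N := n + 1) w (Nat.succ_lt_succ i.isLt)
  refine Set.InvOn.bijOn (f' := fun g s => g s - descentsAbove (n + 1) w s)
    ⟨fun g _ => ?_, fun g hg => ?_⟩ (fun g hg i => ?_) fun g hg => ?_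
  · funext s
    exact Nat.add_sub_cancel ..
  · funext s
    exact Nat.sub_add_cancel (descentsAbove_le_of_mem_compatibleTuples hg s)
  · have hgi := hg i.castSucc_le_succ
    simp only [Fin.val_succ, Fin.val_castSucc, hstep]
    omega
  · refine Fin.antitone_iff_succ_le.2 fun i => ?_
    have hgi := hg i
    simp only [Fin.val_succ, Fin.val_castSucc, hstep]
    omega

theorem tupleGF_compatibleTuples (n : ℕ) (w : ℕ → ℕ) :
    tupleGF (compatibleTuples n w) =
      X ^ majW (n + 1) w * tupleGF {g : Fin (n + 1) → ℕ | Antitone g} :=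
  weightGF_eq_X_pow_mul_of_bijOn (bijOn_add_descentsAbove n w) fun g _ => by
    rw [sum_add_distrib, sum_descentsAbove, add_comm]

end DescentShifts

section Sorting

open PowerSeries

variable {N : ℕ}

/-- Sorting by this key lists the indices by decreasing values of `g`, with ties broken by
increasing labels `ω`. -/
def sortKey (ω g : Fin N → ℕ) (s : Fin N) : ℕᵒᵈ ×ₗ ℕ := toLex (OrderDual.toDual (g s), ω s)

theorem sortKey_lt_iff {ω g : Fin N → ℕ} {s t : Fin N} :
    sortKey ω g s < sortKey ω g t ↔ g t < g s ∨ g s = g t ∧ ω s < ω t := by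
  simp [sortKey, Prod.Lex.toLex_lt_toLex]

variable {ω : Fin N → ℕ}

theorem sortKey_injective (hω : Function.Injective ω) (g : Fin N → ℕ) :
    Function.Injective (sortKey ω g) :=
  fun _ _ h => hω (congrArg Prod.snd (toLex.injective h))

theorem strictMono_sortKey_sort (hω : Function.Injective ω) (g : Fin N → ℕ) :
    StrictMono (sortKey ω g ∘ Tuple.sort (sortKey ω g)) :=
  (Tuple.monotone_sort _).strictMono_of_injective
    ((sortKey_injective hω g).comp (Equiv.injective _))

theorem sort_sortKey_eq_iff (hω : Function.Injective ω) {g : Fin N → ℕ} {π : Equiv.Perm (Fin N)} :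
    Tuple.sort (sortKey ω g) = π ↔ StrictMono (sortKey ω g ∘ π) := by
  refine ⟨?_, fun h => ?_⟩
  · rintro rfl
    exact strictMono_sortKey_sort hω g
  · have hcomp := Tuple.unique_monotone (strictMono_sortKey_sort hω g).monotone h.monotone
    exact Equiv.ext fun s => sortKey_injective hω g (congrFun hcomp s)

theorem sort_symm_lt_iff (hω : Function.Injective ω) {g : Fin N → ℕ} {s t : Fin N} :
    (Tuple.sort (sortKey ω g)).symm s < (Tuple.sort (sortKey ω g)).symm t ↔
      g t < g s ∨ g s = g t ∧ ω s < ω t := by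
  rw [← sortKey_lt_iff, ← (strictMono_sortKey_sort hω g).lt_iff_lt]
  simp

theorem word_val_add_one (π : Equiv.Perm (Fin N)) (s : Fin N) : word π (s + 1) = π s + 1 :=
  dif_pos ⟨Nat.le_add_left 1 _, s.isLt⟩

variable {n : ℕ} {ω : ℕ → ℕ}

theorem sort_sortKey_eq_iff_comp_mem_compatibleTuples
    (hω : Function.Injective fun s : Fin (n + 1) => ω (s + 1)) {g : Fin (n + 1) → ℕ}
    {π : Equiv.Perm (Fin (n + 1))} :
    Tuple.sort (sortKey (fun s => ω (s + 1)) g) = π ↔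
      g ∘ π ∈ compatibleTuples n fun i => ω (word π i) := by
  rw [sort_sortKey_eq_iff hω, Fin.strictMono_iff_lt_succ]
  refine forall_congr' fun i => ?_
  have hword : word π (i + 1) = π i.castSucc + 1 := word_val_add_one π i.castSucc
  have hword' : word π (i + 2) = π i.succ + 1 := word_val_add_one π i.succ
  have hne : ω (π i.castSucc + 1) ≠ ω (π i.succ + 1) := fun h =>
    (Fin.castSucc_lt_succ (i := i)).ne (π.injective (hω h))
  simp only [Function.comp_apply, sortKey_lt_iff, hword, hword']
  split_ifs <;> omega

theorem tupleGF_sort_eq (hω : Function.Injective fun s : Fin (n + 1) => ω (s + 1))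
    (π : Equiv.Perm (Fin (n + 1))) :
    tupleGF {g | Tuple.sort (sortKey (fun s => ω (s + 1)) g) = π} =
      X ^ majW (n + 1) (fun i => ω (word π i)) *
        tupleGF {g : Fin (n + 1) → ℕ | Antitone g} := by
  rw [← tupleGF_compatibleTuples]
  refine (weightGF_congr_of_bijOn (F := fun g => g ∘ π) ?_ fun g _ => Equiv.sum_comp π g).symm
  have hiff (g : Fin (n + 1) → ℕ) := sort_sortKey_eq_iff_comp_mem_compatibleTuples hω (g := g)
    (π := π)
  refine Set.InvOn.bijOn (f' := fun g => g ∘ π.symm) ⟨fun g _ => ?_, fun g _ => ?_⟩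
    (fun g hg => (hiff g).1 hg) fun g hg => (hiff _).2 ?_
  · simp [Function.comp_assoc]
  · simp [Function.comp_assoc]
  · simpa [Function.comp_assoc] using hg

end Sorting

section ZigzagTuples

open PowerSeries

variable {n m : ℕ}

/-- The tuples `g 0 ≥ g 1 ≤ g 2 ≥ ⋯`. -/
def zigzagTuples (n : ℕ) : Set (Fin (n + 1) → ℕ) :=
  {g | ∀ i : Fin n, if (i : ℕ) % 2 = 0 then g i.succ ≤ g i.castSucc else g i.castSucc ≤ g i.succ}

theorem isAltW_word_iff {π : Equiv.Perm (Fin (n + 1))} :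
    IsAltW (n + 1) (word π) ↔ ∀ i : Fin n,
      if (i : ℕ) % 2 = 0 then π i.castSucc < π i.succ else π i.succ < π i.castSucc := by
  have hword (i : Fin n) : word π (i + 1) = π i.castSucc + 1 := word_val_add_one π i.castSucc
  have hword' (i : Fin n) : word π (i + 1 + 1) = π i.succ + 1 := word_val_add_one π i.succ
  refine ⟨fun h i => ?_, fun h i hi => ?_⟩
  · have hi := h (i + 1) (mem_Icc.2 ⟨by omega, by omega⟩)
    rw [hword, hword'] at hi
    simp only [Fin.lt_def]
    split_ifs <;> omega
  · rw [mem_Icc] at hi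
    obtain ⟨i, rfl⟩ := Nat.exists_eq_add_of_le' hi.1
    lift i to Fin n using by omega
    have hi := h i
    rw [hword, hword']
    simp only [Fin.lt_def] at hi
    split_ifs at hi <;> omega

theorem kappaNat_injective (m : ℕ) :
    Function.Injective fun s : Fin (2 * m + 1) => kappaNat (2 * m + 1) (s + 1) := by
  intro s t h
  ext
  simp only [kappaNat] at h
  split_ifs at h <;> omega

theorem mem_zigzagTuples_iff {g : Fin (2 * m + 1) → ℕ} :
    g ∈ zigzagTuples (2 * m) ↔
      (Tuple.sort (sortKey (fun s => kappaNat (2 * m + 1) (s + 1)) g)).symm ∈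
        altPerms (2 * m + 1) := by
  rw [altPerms, mem_filter_univ, isAltW_word_iff]
  refine forall_congr' fun i => ?_
  simp only [sort_symm_lt_iff (kappaNat_injective m)]
  have hkappa : if (i : ℕ) % 2 = 0 then
      kappaNat (2 * m + 1) (i.castSucc + 1) < kappaNat (2 * m + 1) (i.succ + 1) else
      kappaNat (2 * m + 1) (i.succ + 1) < kappaNat (2 * m + 1) (i.castSucc + 1) := by
    simp only [kappaNat, Fin.val_castSucc, Fin.val_succ]
    split_ifs <;> omega
  split_ifs at hkappa ⊢ <;> omega

theorem tupleGF_zigzagTuples (m : ℕ) :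
    tupleGF (zigzagTuples (2 * m)) =
      EstarPS (2 * m + 1) * tupleGF {g : Fin (2 * m + 1) → ℕ | Antitone g} := by
  let sorting (g : Fin (2 * m + 1) → ℕ) : Equiv.Perm (Fin (2 * m + 1)) :=
    (Tuple.sort (sortKey (fun s => kappaNat (2 * m + 1) (s + 1)) g)).symm
  have hfiber (π : Equiv.Perm (Fin (2 * m + 1))) :
      tupleGF {g ∈ zigzagTuples (2 * m) | sorting g = π} =
        if π ∈ altPerms (2 * m + 1) then
          X ^ majKappaInv (2 * m + 1) π * tupleGF {g : Fin (2 * m + 1) → ℕ | Antitone g}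
        else 0 := by
    split_ifs with hπ
    · rw [majKappaInv, ← tupleGF_sort_eq (kappaNat_injective m) π.symm]
      congr 1
      ext g
      refine ⟨fun hg => Equiv.symm_bijective.injective hg.2, fun hg => ?_⟩
      have hsort : sorting g = π := congrArg Equiv.symm hg
      have hmem : sorting g ∈ altPerms (2 * m + 1) := hsort ▸ hπ
      exact ⟨mem_zigzagTuples_iff.2 hmem, hsort⟩
    · ext M
      have hempty : {g ∈ zigzagTuples (2 * m) | sorting g = π} = ∅ :=
        Set.eq_empty_of_forall_notMem fun g hg => hπ (hg.2 ▸ mem_zigzagTuples_iff.1 hg.1)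
      simp [tupleGF, hempty, coeff_weightGF]
  refine (weightGF_eq_sum_fiber (finite_setOf_mem_sum_eq _) sorting).trans ?_
  refine (sum_congr rfl fun π _ => hfiber π).trans ?_
  rw [sum_ite_mem, univ_inter, EstarPS, sum_mul]

theorem isZigzagStep_fin_one_iff {t : ℕ} {s s' : Fin 1 → ℕ} :
    IsZigzagStep t s s' ↔ if t % 2 = 0 then s 0 ≤ s' 0 else s' 0 ≤ s 0 := by
  simp [IsZigzagStep, Interlaces, Nat.even_iff]

theorem bijOn_zigzagTuples (m : ℕ) :
    Set.BijOn (fun Y (s : Fin (2 * m + 1)) => Y (s + 1) 0) (zigzagFamilies 1 (m + 1))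
      (zigzagTuples (2 * m)) := by
  let families (g : Fin (2 * m + 1) → ℕ) : ℕ → Fin 1 → ℕ
    | 0, _ => 0
    | t + 1, _ => if ht : t ≤ 2 * m then g ⟨t, Nat.lt_succ_of_le ht⟩ else 0
  refine Set.InvOn.bijOn (f' := families) ⟨fun Y hY => ?_, fun g _ => ?_⟩ (fun Y hY i => ?_)
    fun g hg => ⟨?_, fun t ht => isZigzagStep_fin_one_iff.2 ?_, fun t ht => ?_⟩
  · funext t p
    obtain rfl := Subsingleton.elim p 0
    rcases t with _ | t
    · simp [families, hY.1]
    · by_cases ht : t ≤ 2 * m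
      · simp [families, ht]
      · simp [families, ht, hY.2.2 (t + 1) (by omega)]
  · funext s
    simp [families, s.is_le]
  · have hi := isZigzagStep_fin_one_iff.1 (hY.2.1 (i + 1) (by omega))
    simp only [Fin.val_castSucc, Fin.val_succ]
    split_ifs at hi ⊢ <;> omega
  · funext p
    simp [families]
  · rcases t with _ | t
    · simp [families]
    · have hgt (hlt : t < 2 * m) := hg ⟨t, hlt⟩
      simp only [families, Fin.castSucc_mk, Fin.succ_mk] at hgt ⊢
      grind
  · obtain ⟨t, rfl⟩ := Nat.exists_eq_add_of_le' (by omega : 1 ≤ t)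
    funext p
    simp [families, show ¬ t ≤ 2 * m by omega]

theorem rppGF_borderStrip (m : ℕ) :
    rppGF (stripCells m 1) = EstarPS (2 * m + 1) * (pochPS (2 * m + 1))⁻¹ := by
  have hrpp : rppGF (stripCells m 1) = tupleGF (zigzagTuples (2 * m)) := by
    have hfamilies := weightGF_zigzagFamilies_eq m 1
    simp only [range_one, sum_singleton, mul_zero, pow_zero, one_mul] at hfamilies
    refine hfamilies.symm.trans (weightGF_congr_of_bijOn (bijOn_zigzagTuples m) fun Y hY => ?_).symm
    have hzero : Y 0 0 = 0 := congrFun hY.1 0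
    rw [area, show 2 * (m + 2 * 1 - 1) = 2 * m + 1 + 1 by omega, sum_range_succ']
    simp [hzero, sum_range]
  have hanti := tupleGF_antitone_mul_pochPS (2 * m + 1)
  have hconst : constantCoeff (pochPS (2 * m + 1)) ≠ 0 :=
    ((IsUnit.of_mul_eq_one_right _ hanti).map constantCoeff).ne_zero
  rw [hrpp, tupleGF_zigzagTuples, PowerSeries.eq_mul_inv_iff_mul_eq hconst, mul_assoc, hanti,
    mul_one]

end ZigzagTuples

theorem statement_16 (n k : ℕ) (hn : 0 < n) (hk : 0 < k) :
    (PowerSeries.X : PowerSeries ℚ) ^ (k * (k - 1) * (6 * n + 8 * k - 1) / 6) *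
        rppGF (deltaCells (n + 2 * k) \ deltaCells n) =
      (Matrix.of fun i j : Fin k =>
        EstarPS (2 * n + 2 * (i : ℕ) + 2 * (j : ℕ) + 1) *
          (pochPS (2 * n + 2 * (i : ℕ) + 2 * (j : ℕ) + 1))⁻¹).det := by
  rw [← stripCells, X_pow_mul_rppGF_stripCells hk]
  congr 1
  ext i j : 2
  rw [Matrix.of_apply, Matrix.of_apply, rppGF_borderStrip, mul_add, mul_add]

end Paper
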